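/- arXiv:2307.07809 — 3 statements merged into one kernel-verified Lean document; each statement's English description precedes it below -/
import Mathlib

section
/- Let m and ℓ be positive integers and let k be a nonzero integer. If m divides kℓ, then Δ^k is central in G(m,ℓ), i.e. its centralizer is all of G(m,ℓ). If m does not divide kℓ, then the centralizer of Δ^k in G(m,ℓ) is exactly the set of integer powers of Δ. -/
/-- The word `a_i a_{i+1} ⋯ a_{i+p-1}` (indices mod `m`) in the free group on `ZMod m`. -/
def circWord (m : ℕ) (i : ZMod m) (p : ℕ) : FreeGroup (ZMod m) :=
  ((List.range p).map (fun k => FreeGroup.of (i + (k : ZMod m)))).prod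

/-- The defining relations of the circular group `G(m,ℓ)`. -/
def circRels (m ℓ : ℕ) : Set (FreeGroup (ZMod m)) :=
  { r | ∃ i : ZMod m, r = circWord m i ℓ * (circWord m (i + 1) ℓ)⁻¹ }

/-- The circular group `G(m,ℓ)`. -/
abbrev CircularGroup (m ℓ : ℕ) := PresentedGroup (circRels m ℓ)

/-- The generator `a_i` of the circular group `G(m,ℓ)`. -/
def circGen (m ℓ : ℕ) (i : ZMod m) : CircularGroup m ℓ :=
  PresentedGroup.of i

/-- The element `s(i,p) = a_i a_{i+1} ⋯ a_{i+p-1}` of the circular group `G(m,ℓ)`. -/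
def circS (m ℓ : ℕ) (i : ZMod m) (p : ℕ) : CircularGroup m ℓ :=
  ((List.range p).map (fun k => circGen m ℓ (i + (k : ZMod m)))).prod

/-- The Garside element `Δ = s(0,ℓ)` of the circular group `G(m,ℓ)`. -/
def circDelta (m ℓ : ℕ) : CircularGroup m ℓ := circS m ℓ 0 ℓ

section FreeProduct

open Monoid Monoid.CoprodI

open scoped Classical in
/-- Right multiplication by a letter of index `j` does not change the index of the first letter of
a reduced word, except possibly for words of length at most one with letter in `M j`. -/
theorem Monoid.CoprodI.Word.fstIdx_prod_smul_of_smul_empty_ne {ι : Type*} {M : ι → Type*}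
    [∀ i, Monoid (M i)] {j : ι} (z : M j) (w : Word M) {i : ι} (hi : w.fstIdx ≠ some i)
    (hw : ¬ (i = j ∧ w = Word.empty)) :
    (w.prod • (of z • (Word.empty : Word M))).fstIdx ≠ some i := by
  have fstIdx_of_smul_empty : ∀ (y : M j) (i : ι), i ≠ j →
      (of y • (Word.empty : Word M)).fstIdx ≠ some i := by
    intro y i hij
    by_cases hy : y = 1
    · subst hy
      simp [Word.fstIdx, Word.empty]
    · have h : (Word.empty : Word M).fstIdx ≠ some j := by simp [Word.fstIdx, Word.empty]
      rw [← Word.cons_eq_smul (h1 := h) (h2 := hy), Word.fstIdx_cons]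
      simpa using Ne.symm hij
  induction w using Word.consRecOn generalizing i with
  | empty =>
    rw [Word.prod_empty, one_smul]
    exact fstIdx_of_smul_empty z i fun h => hw ⟨h, rfl⟩
  | cons l y v hv hy ih =>
    rw [Word.fstIdx_cons] at hi
    rw [Word.prod_cons, mul_smul]
    by_cases hlv : l = j ∧ v = Word.empty
    · obtain ⟨rfl, rfl⟩ := hlv
      rw [Word.prod_empty, one_smul, ← mul_smul, ← map_mul]
      exact fstIdx_of_smul_empty _ i fun h => hi (by rw [h])
    · rw [← Word.cons_eq_smul (h1 := ih hv hlv) (h2 := hy), Word.fstIdx_cons]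
      exact hi

/-- In a free product of groups, an element commuting with a nontrivial element of a factor
belongs to that factor. -/
theorem Monoid.CoprodI.mem_range_of_commute_of {ι : Type*} {M : ι → Type*} [∀ i, Group (M i)]
    {j : ι} {z : M j} (hz : z ≠ 1) {g : CoprodI M} (h : Commute g (of z)) :
    g ∈ (of : M j →* CoprodI M).range := by
  classical
  set p := Word.equivPair j (Word.equiv g) with hp
  have hg : g = of p.head * p.tail.prod := by
    rw [← Word.prod_rcons, ← Word.equivPair_symm, hp, Equiv.symm_apply_apply]
    exact (Word.equiv.symm_apply_apply g).symm
  by_cases ht : p.tail = Word.empty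
  · exact ⟨p.head, by rw [hg, ht, Word.prod_empty, mul_one]⟩
  exfalso
  set y : M j := p.head⁻¹ * z * p.head with hy
  have hy1 : y ≠ 1 := by
    intro h1
    apply hz
    have : z = p.head * y * p.head⁻¹ := by rw [hy]; group
    rw [this, h1]; group
  have hcomm : p.tail.prod * of z = of y * p.tail.prod := by
    have h' := h.eq
    rw [hg] at h'
    rw [hy, map_mul, map_mul, map_inv, mul_assoc, mul_assoc, ← h']
    group
  have key := Word.fstIdx_prod_smul_of_smul_empty_ne z p.tail p.fstIdx_ne (fun h => ht h.2)
  rw [← mul_smul, hcomm, mul_smul] at key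
  have htail : p.tail.prod • (Word.empty : Word M) = p.tail := Word.equiv.apply_symm_apply p.tail
  rw [htail, ← Word.cons_eq_smul (h1 := p.fstIdx_ne) (h2 := hy1), Word.fstIdx_cons] at key
  exact key rfl

end FreeProduct

/-- A cyclic product of factors twisted by a coboundary telescopes. -/
theorem prod_map_range_coboundary {m : ℕ} {K : Type*} [Group K] (h c : ZMod m → K) (i : ZMod m)
    (p : ℕ) :
    ((List.range p).map fun k : ℕ =>
      (h (i + k))⁻¹ * c (i + k) * h (i + k + 1)).prod =
      (h i)⁻¹ * ((List.range p).map fun k : ℕ => c (i + k)).prod * h (i + p) := by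
  induction p with
  | zero => simp
  | succ p ih =>
    simp only [List.range_succ, List.map_append, List.prod_append, ih, List.map_singleton,
      List.prod_singleton, Nat.cast_succ, ← add_assoc]
    group

theorem circWord_eq_prod_map_range (m : ℕ) (i : ZMod m) (p : ℕ) :
    circWord m i p = ((List.range p).map fun k : ℕ => FreeGroup.of (i + (k : ZMod m))).prod := by
  simp [circWord, ← List.map_eq_flatMap, Function.comp_def]

theorem circS_eq_prod_map_range (m ℓ : ℕ) (i : ZMod m) (p : ℕ) :
    circS m ℓ i p = ((List.range p).map fun k : ℕ => circGen m ℓ (i + (k : ZMod m))).prod := by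
  simp [circS, ← List.map_eq_flatMap, Function.comp_def]

theorem map_circWord {m : ℕ} {K : Type*} [Group K] (f : ZMod m → K) (i : ZMod m) (p : ℕ) :
    FreeGroup.lift f (circWord m i p) =
      ((List.range p).map fun k : ℕ => f (i + k)).prod := by
  simp [circWord_eq_prod_map_range, map_list_prod, List.map_map, Function.comp_def]

theorem mk_circWord (m ℓ : ℕ) (i : ZMod m) (p : ℕ) :
    PresentedGroup.mk (circRels m ℓ) (circWord m i p) = circS m ℓ i p := by
  rw [circWord_eq_prod_map_range, circS_eq_prod_map_range, map_list_prod, List.map_map]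
  rfl

theorem circS_add_one (m ℓ : ℕ) (i : ZMod m) : circS m ℓ (i + 1) ℓ = circS m ℓ i ℓ := by
  have h : PresentedGroup.mk (circRels m ℓ) (circWord m i ℓ * (circWord m (i + 1) ℓ)⁻¹) = 1 :=
    PresentedGroup.one_of_mem ⟨i, rfl⟩
  rw [map_mul, map_inv, mk_circWord, mk_circWord, mul_inv_eq_one] at h
  exact h.symm

theorem circS_eq_circDelta (m ℓ : ℕ) [NeZero m] (i : ZMod m) :
    circS m ℓ i ℓ = circDelta m ℓ := by
  obtain ⟨n, rfl⟩ := ZMod.natCast_zmod_surjective i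
  induction n with
  | zero => simp [circDelta]
  | succ n ih => rw [Nat.cast_succ, circS_add_one, ih]

theorem circGen_mul_circDelta (m ℓ : ℕ) [NeZero m] (i : ZMod m) :
    circGen m ℓ i * circDelta m ℓ = circDelta m ℓ * circGen m ℓ (i + ℓ) := by
  have h₁ : circS m ℓ i (ℓ + 1) = circS m ℓ i ℓ * circGen m ℓ (i + ℓ) := by
    simp [circS_eq_prod_map_range, List.range_succ]
  have h₂ : circS m ℓ i (ℓ + 1) = circGen m ℓ i * circS m ℓ (i + 1) ℓ := by
    simp [circS_eq_prod_map_range, List.range_succ_eq_map, Function.comp_def, add_assoc,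
      add_comm (1 : ZMod m)]
  rw [circS_eq_circDelta] at h₁ h₂
  rw [← h₁, ← h₂]

theorem circGen_mul_circDelta_zpow (m ℓ : ℕ) [NeZero m] (k : ℤ) (i : ZMod m) :
    circGen m ℓ i * circDelta m ℓ ^ k = circDelta m ℓ ^ k * circGen m ℓ (i + k * ℓ) := by
  induction k using Int.induction_on generalizing i with
  | zero => simp
  | succ n ih =>
    rw [zpow_add_one, ← mul_assoc, ih, mul_assoc, circGen_mul_circDelta, mul_assoc]
    congr 3
    push_cast
    ring
  | pred n ih =>
    rw [zpow_sub_one, ← mul_assoc, ih, mul_assoc, mul_assoc]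
    congr 1
    rw [mul_inv_eq_iff_eq_mul, mul_assoc, circGen_mul_circDelta, inv_mul_cancel_left]
    congr 1
    push_cast
    ring

theorem circDelta_zpow_mem_center (m ℓ : ℕ) [NeZero m] {k : ℤ}
    (hk : (k * ℓ : ZMod m) = 0) : circDelta m ℓ ^ k ∈ Subgroup.center (CircularGroup m ℓ) := by
  have hle : Subgroup.closure (Set.range (PresentedGroup.of (rels := circRels m ℓ))) ≤
      Subgroup.centralizer {circDelta m ℓ ^ k} := by
    rw [Subgroup.closure_le]
    rintro _ ⟨i, rfl⟩
    rw [SetLike.mem_coe, Subgroup.mem_centralizer_singleton_iff]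
    have h := circGen_mul_circDelta_zpow m ℓ k i
    rw [hk, add_zero] at h
    exact h
  rw [PresentedGroup.closure_range_of] at hle
  rw [Subgroup.mem_center_iff]
  intro g
  exact Subgroup.mem_centralizer_singleton_iff.mp (hle (Subgroup.mem_top g))

/-- A coordinate on each orbit of translation by `a`. -/
theorem exists_translation_coordinate {A : Type*} [AddCommGroup A] (a : A) :
    ∃ e : A → ℤ, ∀ i, (addOrderOf a : ℤ) ∣ e (i + a) - (e i + 1) := by
  have h : ∀ i : A, ∃ e : ℤ,
      i = Quotient.out (QuotientAddGroup.mk i : A ⧸ AddSubgroup.zmultiples a) + e • a := by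
    intro i
    obtain ⟨⟨b, e, he⟩, hb⟩ := QuotientAddGroup.mk_out_eq_add (AddSubgroup.zmultiples a) i
    refine ⟨-e, ?_⟩
    simp only at he hb
    rw [hb, ← he]
    simp
  choose e he using h
  refine ⟨e, fun i => ?_⟩
  have hmk : (QuotientAddGroup.mk (i + a) : A ⧸ AddSubgroup.zmultiples a) =
      QuotientAddGroup.mk i := by
    rw [QuotientAddGroup.eq]
    simp
  have h₁ := he (i + a)
  have h₂ := he i
  rw [hmk] at h₁
  rw [addOrderOf_dvd_iff_zsmul_eq_zero, sub_zsmul, add_zsmul, one_zsmul,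
    ← sub_eq_add_neg, sub_eq_zero]
  apply add_left_cancel (a := Quotient.out (QuotientAddGroup.mk i : A ⧸ AddSubgroup.zmultiples a))
  rw [← h₁, ← add_assoc, ← h₂]

/-- The group generated by `c_i`, `i ∈ ZMod m`, in which every cyclic product of `ℓ` consecutive
generators is trivial. -/
abbrev CyclicProductGroup (m ℓ : ℕ) :=
  PresentedGroup (Set.range fun i : ZMod m => circWord m i ℓ)

/-- The factors of the free product onto which `G(m,ℓ)` maps with central kernel. -/
abbrev circFactor (m ℓ n : ℕ) : Bool → Type
  | true => Multiplicative (ZMod n)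
  | false => CyclicProductGroup m ℓ

instance (m ℓ n : ℕ) : ∀ b, Group (circFactor m ℓ n b)
  | true => inferInstanceAs (Group (Multiplicative (ZMod n)))
  | false => inferInstanceAs (Group (CyclicProductGroup m ℓ))

/-- The homomorphism from a cyclic group of order `n` determined by an element `x` with
`x ^ n = 1`. -/
def cyclicLift {K : Type*} [Group K] (n : ℕ) (x : K) (hx : x ^ n = 1) :
    Multiplicative (ZMod n) →* K :=
  AddMonoidHom.toMultiplicativeLeft
    (ZMod.lift n ⟨zmultiplesHom (Additive K) (Additive.ofMul x), by
      simpa [← ofMul_pow] using hx⟩)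

theorem cyclicLift_ofAdd_one_zpow {K : Type*} [Group K] (n : ℕ) (x : K) (hx : x ^ n = 1) (k : ℤ) :
    cyclicLift n x hx (Multiplicative.ofAdd (1 : ZMod n) ^ k) = x ^ k := by
  have h : Multiplicative.ofAdd (1 : ZMod n) ^ k = Multiplicative.ofAdd (k : ZMod n) := by
    rw [← ofAdd_zsmul]; simp
  rw [h, cyclicLift]
  simp

open Monoid in
theorem mem_zpowers_circDelta_of_commute (m ℓ : ℕ) [NeZero m] {k : ℤ}
    (hk : (k * ℓ : ZMod m) ≠ 0) {g : CircularGroup m ℓ} (hg : Commute g (circDelta m ℓ ^ k)) :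
    g ∈ Subgroup.zpowers (circDelta m ℓ) := by
  set n := addOrderOf (ℓ : ZMod m) with hn
  obtain ⟨e, he⟩ := exists_translation_coordinate (ℓ : ZMod m)
  have zpow_coordinate : ∀ {K : Type} [Group K] (y : K), y ^ n = 1 → ∀ i,
      y ^ e (i + ℓ) = y ^ e i * y := by
    intro K _ y hy i
    obtain ⟨q, hq⟩ := he i
    rw [← zpow_add_one, ← sub_add_cancel (e (i + ℓ)) (e i + 1), hq, zpow_add, zpow_mul,
      zpow_natCast, ← hn, hy, one_zpow, one_mul]
  -- The quotient of `G(m,ℓ)` by the central subgroup generated by `Δ ^ n`.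
  set D := circDelta m ℓ with hD
  have hcent : D ^ n ∈ Subgroup.center (CircularGroup m ℓ) := by
    rw [← zpow_natCast]
    apply circDelta_zpow_mem_center
    simpa using addOrderOf_nsmul_eq_zero (ℓ : ZMod m)
  have hle : Subgroup.zpowers (D ^ n) ≤ Subgroup.center (CircularGroup m ℓ) := by
    rwa [Subgroup.zpowers_le]
  have hnormal : (Subgroup.zpowers (D ^ n)).Normal :=
    ⟨fun a ha b => by
      rwa [Subgroup.mem_center_iff.mp (hle ha) b, mul_inv_cancel_right]⟩
  let π := QuotientGroup.mk' (Subgroup.zpowers (D ^ n))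
  have hπ : (π D) ^ n = 1 := by
    rw [← map_pow]
    exact (QuotientGroup.eq_one_iff _).mpr (Subgroup.mem_zpowers _)
  -- The homomorphism to the free product.
  let z : circFactor m ℓ n true := Multiplicative.ofAdd (1 : ZMod n)
  let c : ZMod m → circFactor m ℓ n false := fun i => PresentedGroup.of i
  have hzpow : ∀ k : ℤ, z ^ k = Multiplicative.ofAdd (k : ZMod n) := fun k => by
    change Multiplicative.ofAdd (1 : ZMod n) ^ k = _
    rw [← ofAdd_zsmul]; simp
  have hzn : z ^ n = 1 := by
    rw [← zpow_natCast, hzpow]; simp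
  let x : CoprodI (circFactor m ℓ n) := CoprodI.of z
  have hxn : x ^ n = 1 := by rw [← map_pow, hzn, map_one]
  have hc : ∀ i, ((List.range ℓ).map fun k : ℕ => c (i + k)).prod = 1 := by
    intro i
    have h : PresentedGroup.mk (Set.range fun i : ZMod m => circWord m i ℓ) (circWord m i ℓ) = 1 :=
      PresentedGroup.one_of_mem ⟨i, rfl⟩
    rw [circWord_eq_prod_map_range, map_list_prod, List.map_map] at h
    exact h
  let f : ZMod m → CoprodI (circFactor m ℓ n) := fun i =>
    (x ^ e i)⁻¹ * CoprodI.of (c i) * x ^ e (i + 1)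
  have hf : ∀ i, FreeGroup.lift f (circWord m i ℓ) = x := by
    intro i
    have hci : ((List.range ℓ).map fun k : ℕ =>
        (CoprodI.of (c (i + k)) : CoprodI (circFactor m ℓ n))).prod = 1 := by
      have h := congrArg (CoprodI.of (M := circFactor m ℓ n) (i := false)) (hc i)
      rw [map_one, map_list_prod, List.map_map] at h
      exact h
    rw [map_circWord]
    refine (prod_map_range_coboundary (fun i => x ^ e i) (fun i => CoprodI.of (c i)) i ℓ).trans ?_
    rw [hci, zpow_coordinate x hxn]
    group
  let φ : CircularGroup m ℓ →* CoprodI (circFactor m ℓ n) := PresentedGroup.toGroup (f := f) (by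
    rintro _ ⟨i, rfl⟩
    rw [map_mul, map_inv, hf, hf, mul_inv_cancel])
  have hφD : φ D = x := by
    rw [hD, circDelta, ← mk_circWord]
    exact hf 0
  -- The homomorphism from the free product to the quotient.
  let d : ZMod m → CircularGroup m ℓ ⧸ Subgroup.zpowers (D ^ n) := fun i =>
    π D ^ e i * π (circGen m ℓ i) * (π D ^ e (i + 1))⁻¹
  have hd : ∀ r ∈ Set.range fun i : ZMod m => circWord m i ℓ, FreeGroup.lift d r = 1 := by
    rintro _ ⟨i, rfl⟩
    have hprod : ((List.range ℓ).map fun k : ℕ => π (circGen m ℓ (i + k))).prod = π D := by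
      refine Eq.trans ?_ (congrArg π (circS_eq_circDelta m ℓ i))
      rw [circS_eq_prod_map_range, map_list_prod, List.map_map]
      rfl
    have h := prod_map_range_coboundary (fun i => (π D ^ e i)⁻¹)
      (fun i => π (circGen m ℓ i)) i ℓ
    simp only [inv_inv] at h
    rw [map_circWord]
    refine h.trans ?_
    rw [hprod, zpow_coordinate (π D) hπ, mul_inv_cancel]
  let ψ : CoprodI (circFactor m ℓ n) →* CircularGroup m ℓ ⧸ Subgroup.zpowers (D ^ n) :=
    CoprodI.lift fun
      | true => cyclicLift n (π D) hπ
      | false => PresentedGroup.toGroup hd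
  have hψz : ∀ k : ℤ, ψ (CoprodI.of (z ^ k)) = π D ^ k := fun k =>
    (CoprodI.lift_of _ _).trans (cyclicLift_ofAdd_one_zpow n (π D) hπ k)
  have hψx : ψ x = π D := by simpa using hψz 1
  have hψc : ∀ i, ψ (CoprodI.of (c i)) = d i := fun i =>
    (CoprodI.lift_of _ _).trans (PresentedGroup.toGroup.of hd)
  have hψφ : ψ.comp φ = π := by
    apply PresentedGroup.ext
    intro i
    have h : φ (PresentedGroup.of i) = f i := PresentedGroup.toGroup.of _
    rw [MonoidHom.comp_apply, h]
    simp only [f, map_mul, map_inv, map_zpow, hψx, hψc, d]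
    rw [mul_assoc, inv_mul_cancel_right, inv_mul_cancel_left]
    rfl
  have hzk : z ^ k ≠ 1 := by
    rw [hzpow]
    intro h
    have h0 : (k : ZMod n) = 0 := h
    rw [ZMod.intCast_zmod_eq_zero_iff_dvd, hn, addOrderOf_dvd_iff_zsmul_eq_zero] at h0
    exact hk (by simpa using h0)
  obtain ⟨y, hy⟩ := CoprodI.mem_range_of_commute_of (M := circFactor m ℓ n) hzk (g := φ g) (by
    have := hg.map φ
    rwa [map_zpow, hφD, ← map_zpow] at this)
  obtain ⟨j, hj⟩ : ∃ j : ℤ, z ^ j = y := by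
    obtain ⟨j, hj⟩ := ZMod.intCast_surjective
      (Multiplicative.toAdd (show Multiplicative (ZMod n) from y))
    exact ⟨j, by rw [hzpow, hj]; rfl⟩
  have hgj : π g = π (D ^ j) := by
    rw [← hψφ, MonoidHom.comp_apply, ← hy, ← hj, hψz, hψφ, map_zpow]
  obtain ⟨q, hq⟩ := QuotientGroup.eq.mp hgj
  rw [eq_inv_mul_iff_mul_eq] at hq
  rw [← mul_inv_eq_iff_eq_mul.mpr hq.symm]
  refine mul_mem (zpow_mem (Subgroup.mem_zpowers D) j) (inv_mem ?_)
  exact zpow_mem (pow_mem (Subgroup.mem_zpowers D) n) q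

/-- If `m ∣ kℓ` then `Δ^k` is central in `G(m,ℓ)`; otherwise
the centralizer of `Δ^k` is exactly the set of integer powers of `Δ`. -/
theorem centralizer_delta_power (m ℓ : ℕ) (hm : 0 < m) (hℓ : 0 < ℓ) (k : ℤ) (hk : k ≠ 0) :
    ((m : ℤ) ∣ k * ℓ → Subgroup.centralizer {(circDelta m ℓ) ^ k} = ⊤) ∧
    (¬ (m : ℤ) ∣ k * ℓ → Subgroup.centralizer {(circDelta m ℓ) ^ k} =
      Subgroup.zpowers (circDelta m ℓ)) := by
  have : NeZero m := ⟨hm.ne'⟩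
  have hdvd : (m : ℤ) ∣ k * ℓ ↔ (k * ℓ : ZMod m) = 0 := by
    rw [← ZMod.intCast_zmod_eq_zero_iff_dvd]
    push_cast
    rfl
  rw [hdvd]
  refine ⟨fun h => ?_, fun h => le_antisymm (fun g hg => ?_) ?_⟩
  · rw [Subgroup.centralizer_eq_top_iff_subset, Set.singleton_subset_iff]
    exact circDelta_zpow_mem_center m ℓ h
  · exact mem_zpowers_circDelta_of_commute m ℓ h (Subgroup.mem_centralizer_singleton_iff.mp hg)
  · rw [Subgroup.zpowers_le, Subgroup.mem_centralizer_singleton_iff]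
    exact (Commute.self_zpow _ k).eq
end

section
/- Let m and ℓ be positive integers, let k be an integer and let p satisfy 0 < p < ℓ. Assume m divides kℓ + p, so that x = Δ^k s(0,p) is a periodic element of G(m,ℓ). Then the centralizer of x in G(m,ℓ) is exactly the set of integer powers of s(p,m) = a_p a_{p+1} ⋯ a_{p+m−1} (indices modulo m). -/
namespace Monoid.CoprodI

variable {ι : Type*} {G : ι → Type*} [∀ i, Group (G i)]

/-- Right multiplication by an element of a factor `G i` keeps the index of the first letter of a
reduced word, unless the word represents an element of `G i`. -/
theorem Word.exists_prod_mul_of {i : ι} (g : G i) (w : Word G) :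
    (∃ h : G i, w.prod = of h) ∨
      ∃ w' : Word G, w'.prod = w.prod * of g ∧ w'.fstIdx = w.fstIdx := by
  induction w using Word.consRecOn with
  | empty => exact Or.inl ⟨1, by simp⟩
  | cons j a w hw ha ih =>
    have key : ∀ w' : Word G, w'.prod = w.prod * of g → w'.fstIdx ≠ some j →
        ∃ v : Word G, v.prod = (Word.cons a w hw ha).prod * of g ∧
          v.fstIdx = (Word.cons a w hw ha).fstIdx := fun w' hp hf =>
      ⟨Word.cons a w' hf ha, by simp [hp, mul_assoc], by simp⟩
    rcases ih with ⟨h, hh⟩ | ⟨w', hp, hf⟩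
    · by_cases hij : j = i
      · subst hij
        exact Or.inl ⟨a * h, by simp [hh]⟩
      · refine Or.inr ?_
        by_cases h1 : h * g = 1
        · exact key Word.empty (by rw [hh, ← map_mul, h1]; simp) (by simp [Word.fstIdx])
        · refine key (Word.cons (h * g) Word.empty (by simp [Word.fstIdx]) h1) (by simp [hh]) ?_
          rw [Word.fstIdx_cons]
          exact fun h' => hij (Option.some.inj h').symm
    · exact Or.inr (key w' hp (hf ▸ hw))

/-- In a free product, whatever commutes with a nontrivial element of a factor lies in that
factor. -/
theorem mem_range_of_of_commute {i : ι} {g : G i} (hg : g ≠ 1) {z : CoprodI G}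
    (hz : Commute (of g) z) : ∃ h : G i, z = of h := by
  classical
  obtain ⟨⟨h, w, hw⟩, rfl⟩ : ∃ q : Word.Pair G i, of q.head * q.tail.prod = z :=
    ⟨Word.equivPair i (Word.equiv z), by
      rw [← Word.prod_rcons, ← Word.equivPair_symm, Equiv.symm_apply_apply]
      exact Word.equiv.symm_apply_apply z⟩
  rcases w.exists_prod_mul_of g with ⟨h', hh'⟩ | ⟨w', hp, hf⟩
  · exact ⟨h * h', by simp [hh']⟩
  · have hg' : h⁻¹ * g * h ≠ 1 := fun h1 => hg (by
      simpa [mul_assoc, inv_mul_eq_one, eq_comm] using h1)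
    have hprod : w'.prod = (Word.cons (h⁻¹ * g * h) w hw hg').prod := by
      have := hz.eq
      rw [hp, Word.prod_cons]
      simp only [map_mul, map_inv, mul_assoc] at this ⊢
      rw [this, inv_mul_cancel_left]
    have heq : w' = Word.cons (h⁻¹ * g * h) w hw hg' := Word.equiv.symm.injective hprod
    rw [heq, Word.fstIdx_cons] at hf
    exact absurd hf.symm hw

end Monoid.CoprodI

/-- The homomorphism from `ℤ/n` sending the generator to an element `g` with `g ^ n = 1`. -/
def zmodPowersHom {K : Type*} [Group K] (n : ℕ) (g : K) (hg : g ^ n = 1) :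
    Multiplicative (ZMod n) →* K :=
  AddMonoidHom.toMultiplicativeLeft
    (ZMod.lift n ⟨zmultiplesHom (Additive K) (Additive.ofMul g), by
      simp [← ofMul_pow, hg]⟩)

theorem zmodPowersHom_ofAdd_one {K : Type*} [Group K] (n : ℕ) (g : K) (hg : g ^ n = 1) :
    zmodPowersHom n g hg (Multiplicative.ofAdd 1) = g := by
  have h := ZMod.lift_coe n (⟨zmultiplesHom (Additive K) (Additive.ofMul g), by
      simp [← ofMul_pow, hg]⟩ : {f : ℤ →+ Additive K // f n = 0}) 1
  rw [Int.cast_one] at h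
  simpa [zmodPowersHom] using congrArg Additive.toMul h

theorem list_prod_conj_eq {K : Type*} [Group K] {m : ℕ} (T : Multiplicative (ZMod m) →* K)
    (u : K) (i : ZMod m) (p : ℕ) :
    ((List.range p).map fun k : ℕ => T (.ofAdd (i + k)) * u * (T (.ofAdd (i + k + 1)))⁻¹).prod =
      T (.ofAdd i) * u ^ p * (T (.ofAdd (i + p)))⁻¹ := by
  induction p with
  | zero => simp
  | succ p ih =>
    rw [List.range_succ, List.map_append, List.prod_append, ih]
    simp [pow_succ, mul_assoc, add_assoc]

namespace CircularGroup

variable {m ℓ : ℕ}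

theorem circWord_eq (i : ZMod m) (p : ℕ) :
    circWord m i p = ((List.range p).map fun k : ℕ => FreeGroup.of (i + (k : ZMod m))).prod := by
  simp [circWord, ← List.map_eq_flatMap, Function.comp_def]

theorem circS_eq (i : ZMod m) (p : ℕ) :
    circS m ℓ i p = ((List.range p).map fun k : ℕ => circGen m ℓ (i + (k : ZMod m))).prod := by
  simp [circS, ← List.map_eq_flatMap, Function.comp_def]

theorem circS_eq_mk (i : ZMod m) (p : ℕ) :
    circS m ℓ i p = PresentedGroup.mk (circRels m ℓ) (circWord m i p) := by
  simp [circS_eq, circWord_eq, map_list_prod, circGen, PresentedGroup.of, Function.comp_def]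

theorem circS_length_succ (i : ZMod m) : circS m ℓ (i + 1) ℓ = circS m ℓ i ℓ := by
  rw [circS_eq_mk, circS_eq_mk]
  exact (PresentedGroup.mk_eq_mk_of_mul_inv_mem (rels := circRels m ℓ) ⟨i, rfl⟩).symm

theorem circS_length (hm : 0 < m) (i : ZMod m) : circS m ℓ i ℓ = circDelta m ℓ := by
  have : NeZero m := ⟨hm.ne'⟩
  rw [← ZMod.natCast_zmod_val i]
  induction i.val with
  | zero => simp [circDelta]
  | succ n ih => rw [Nat.cast_succ, circS_length_succ, ih]

/-- A family of elements with equal cyclic products of length `ℓ` defines a homomorphism out of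
the circular group. -/
def liftHom {K : Type*} [Group K] (f : ZMod m → K)
    (hf : ∀ i : ZMod m, ((List.range ℓ).map fun k : ℕ => f (i + k)).prod =
      ((List.range ℓ).map fun k : ℕ => f (i + 1 + k)).prod) : CircularGroup m ℓ →* K :=
  PresentedGroup.toGroup (f := f) (by
    rintro _ ⟨i, rfl⟩
    simpa [circWord_eq, map_list_prod, Function.comp_def, mul_inv_eq_one] using hf i)

theorem liftHom_circGen {K : Type*} [Group K] (f : ZMod m → K) (hf) (i : ZMod m) :
    liftHom (ℓ := ℓ) f hf (circGen m ℓ i) = f i :=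
  PresentedGroup.toGroup.of _

theorem hom_ext {K : Type*} [Group K] {f g : CircularGroup m ℓ →* K}
    (h : ∀ i, f (circGen m ℓ i) = g (circGen m ℓ i)) : f = g :=
  PresentedGroup.ext h

/-- The endomorphism `a_i ↦ a_{i+j}`. -/
def shiftHom (m ℓ : ℕ) (j : ZMod m) : CircularGroup m ℓ →* CircularGroup m ℓ :=
  liftHom (fun i => circGen m ℓ (i + j)) (fun i => by
    have h := circS_length_succ (ℓ := ℓ) (i + j)
    simp only [circS_eq] at h
    convert h.symm using 5 <;> ring)

theorem shiftHom_circGen (i j : ZMod m) :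
    shiftHom m ℓ j (circGen m ℓ i) = circGen m ℓ (i + j) :=
  liftHom_circGen _ _ _

theorem shiftHom_comp (j j' : ZMod m) :
    (shiftHom m ℓ j).comp (shiftHom m ℓ j') = shiftHom m ℓ (j + j') :=
  hom_ext fun i => by
    simp only [MonoidHom.comp_apply, shiftHom_circGen, add_assoc, add_comm j']

theorem shiftHom_zero : shiftHom m ℓ 0 = MonoidHom.id _ :=
  hom_ext fun i => by simp [shiftHom_circGen]

/-- The action of `ℤ/m` on the circular group by cyclic shifts of the generators. -/
def shift (m ℓ : ℕ) : Multiplicative (ZMod m) →* MulAut (CircularGroup m ℓ) where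
  toFun j := MonoidHom.toMulEquiv (shiftHom m ℓ j.toAdd) (shiftHom m ℓ (-j.toAdd))
    (by rw [shiftHom_comp, neg_add_cancel, shiftHom_zero])
    (by rw [shiftHom_comp, add_neg_cancel, shiftHom_zero])
  map_one' := by
    ext x
    exact DFunLike.congr_fun shiftHom_zero x
  map_mul' j j' := by
    ext x
    exact (DFunLike.congr_fun (shiftHom_comp j.toAdd j'.toAdd) x).symm

theorem shift_apply (j : ZMod m) (x : CircularGroup m ℓ) :
    shift m ℓ (.ofAdd j) x = shiftHom m ℓ j x := rfl

/-- The extension of the circular group by the cyclic shift of its generators. -/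
abbrev Extended (m ℓ : ℕ) := CircularGroup m ℓ ⋊[shift m ℓ] Multiplicative (ZMod m)

/-- The embedding of the circular group into its extension. -/
abbrev incl (m ℓ : ℕ) : CircularGroup m ℓ →* Extended m ℓ := SemidirectProduct.inl

/-- The embedding of the shifts into the extension. -/
abbrev rot (m ℓ : ℕ) : Multiplicative (ZMod m) →* Extended m ℓ := SemidirectProduct.inr

/-- The element `a_0 t` of the extension, where `t` is the shift by one. -/
def root (m ℓ : ℕ) : Extended m ℓ := incl m ℓ (circGen m ℓ 0) * rot m ℓ (.ofAdd 1)

theorem incl_circGen (i : ZMod m) :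
    incl m ℓ (circGen m ℓ i) =
      rot m ℓ (.ofAdd i) * root m ℓ * (rot m ℓ (.ofAdd (i + 1)))⁻¹ := by
  have h := SemidirectProduct.inl_aut (φ := shift m ℓ) (.ofAdd i) (circGen m ℓ 0)
  rw [shift_apply, shiftHom_circGen, zero_add] at h
  rw [map_inv] at h
  change incl m ℓ (circGen m ℓ i) = rot m ℓ (.ofAdd i) * incl m ℓ (circGen m ℓ 0) *
    (rot m ℓ (.ofAdd i))⁻¹ at h
  rw [h, root, ofAdd_add, map_mul, mul_inv_rev, mul_assoc]
  group

theorem incl_circS (i : ZMod m) (p : ℕ) :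
    incl m ℓ (circS m ℓ i p) =
      rot m ℓ (.ofAdd i) * root m ℓ ^ p * (rot m ℓ (.ofAdd (i + p)))⁻¹ := by
  rw [← list_prod_conj_eq, circS_eq, map_list_prod, List.map_map]
  simp only [Function.comp_def, incl_circGen]

theorem root_pow_commute_rot (hm : 0 < m) (j : Multiplicative (ZMod m)) :
    Commute (root m ℓ ^ ℓ) (rot m ℓ j) := by
  have h : incl m ℓ (circS m ℓ j.toAdd ℓ) = incl m ℓ (circS m ℓ 0 ℓ) := by
    rw [circS_length hm, circS_length hm]
  rw [incl_circS, incl_circS, zero_add, ofAdd_zero, map_one, one_mul, add_comm, ofAdd_add,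
    map_mul, ofAdd_toAdd, mul_inv_rev, ← mul_assoc, mul_left_inj, mul_inv_eq_iff_eq_mul] at h
  exact h.symm

theorem root_pow_commute (hm : 0 < m) (y : Extended m ℓ) : Commute (root m ℓ ^ ℓ) y := by
  have h : (MulAut.conj (root m ℓ ^ ℓ)).toMonoidHom = MonoidHom.id _ := by
    refine SemidirectProduct.hom_ext (hom_ext fun i => ?_) (MonoidHom.ext fun j => ?_)
    · refine mul_inv_eq_iff_eq_mul.mpr (Commute.eq ?_)
      change Commute (root m ℓ ^ ℓ) (incl m ℓ (circGen m ℓ i))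
      rw [incl_circGen]
      exact ((root_pow_commute_rot hm _).mul_right (Commute.pow_self _ _)).mul_right
        (root_pow_commute_rot hm _).inv_right
    · exact mul_inv_eq_iff_eq_mul.mpr (root_pow_commute_rot hm j).eq
  exact mul_inv_eq_iff_eq_mul.mp (DFunLike.congr_fun h y)

/-- The free product of `ℤ/ℓ` (index `true`) and `ℤ/m` (index `false`). -/
abbrev FreeProd (m ℓ : ℕ) := Monoid.CoprodI fun b : Bool => Multiplicative (ZMod (cond b ℓ m))

/-- The inclusion of the factor `ℤ/m`. -/
def factorM (m ℓ : ℕ) : Multiplicative (ZMod m) →* FreeProd m ℓ :=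
  Monoid.CoprodI.of (M := fun b : Bool => Multiplicative (ZMod (cond b ℓ m))) (i := false)

/-- The inclusion of the factor `ℤ/ℓ`. -/
def factorL (m ℓ : ℕ) : Multiplicative (ZMod ℓ) →* FreeProd m ℓ :=
  Monoid.CoprodI.of (M := fun b : Bool => Multiplicative (ZMod (cond b ℓ m))) (i := true)

theorem factorL_one_zpow (n : ℤ) :
    factorL m ℓ (.ofAdd 1) ^ n = factorL m ℓ (.ofAdd (n : ZMod ℓ)) := by
  rw [← map_zpow, ← ofAdd_zsmul, zsmul_one]

theorem factorL_one_pow : factorL m ℓ (.ofAdd 1) ^ ℓ = 1 := by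
  rw [← zpow_natCast, factorL_one_zpow]
  simp

/-- The homomorphism from the circular group to the free product `ℤ/ℓ * ℤ/m`. -/
def toFreeProdAux (m ℓ : ℕ) : CircularGroup m ℓ →* FreeProd m ℓ :=
  liftHom (fun i => factorM m ℓ (.ofAdd i) * factorL m ℓ (.ofAdd 1) *
    (factorM m ℓ (.ofAdd (i + 1)))⁻¹) (fun i => by
    rw [list_prod_conj_eq, list_prod_conj_eq, factorL_one_pow]
    simp only [mul_one, ← map_inv, ← map_mul, ← ofAdd_neg, ← ofAdd_add]
    congr 2
    ring)

/-- The homomorphism from the extended circular group to the free product `ℤ/ℓ * ℤ/m`. -/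
def toFreeProd (m ℓ : ℕ) : Extended m ℓ →* FreeProd m ℓ :=
  SemidirectProduct.lift (toFreeProdAux m ℓ) (factorM m ℓ) (fun j => hom_ext fun i => by
    induction j using Multiplicative.rec with | _ j =>
    simp only [MonoidHom.comp_apply, MulEquiv.coe_toMonoidHom, shift_apply, shiftHom_circGen,
      toFreeProdAux, liftHom_circGen, MulAut.conj_apply]
    rw [show i + j + 1 = j + (i + 1) by ring, add_comm i j, ofAdd_add j i, ofAdd_add j (i + 1)]
    simp only [map_mul]
    group)

theorem toFreeProd_rot (j : Multiplicative (ZMod m)) :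
    toFreeProd m ℓ (rot m ℓ j) = factorM m ℓ j :=
  SemidirectProduct.lift_inr ..

theorem toFreeProd_root : toFreeProd m ℓ (root m ℓ) = factorL m ℓ (.ofAdd 1) := by
  rw [root, map_mul, toFreeProd_rot, toFreeProd, SemidirectProduct.lift_inl, toFreeProdAux,
    liftHom_circGen]
  simp

theorem mem_zpowers_of_toFreeProd_eq_one (hm : 0 < m) {y : Extended m ℓ}
    (hy : toFreeProd m ℓ y = 1) : y ∈ Subgroup.zpowers (root m ℓ ^ ℓ) := by
  set N := Subgroup.zpowers (root m ℓ ^ ℓ)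
  have : N.Normal := ⟨fun n hn g => by
    obtain ⟨e, rfl⟩ := Subgroup.mem_zpowers_iff.mp hn
    rw [((root_pow_commute hm g).zpow_left e).eq.symm, mul_inv_cancel_right]
    exact hn⟩
  have hroot : (QuotientGroup.mk' N (root m ℓ)) ^ ℓ = 1 := by
    rw [← map_pow]
    exact (QuotientGroup.eq_one_iff _).mpr (Subgroup.mem_zpowers _)
  let back : FreeProd m ℓ →* Extended m ℓ ⧸ N := Monoid.CoprodI.lift fun b =>
    match b with
    | true => zmodPowersHom ℓ (QuotientGroup.mk' N (root m ℓ)) hroot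
    | false => (QuotientGroup.mk' N).comp (rot m ℓ)
  have hM : ∀ j, back (factorM m ℓ j) = QuotientGroup.mk' N (rot m ℓ j) := fun j =>
    Monoid.CoprodI.lift_of ..
  have hL : back (factorL m ℓ (.ofAdd 1)) = QuotientGroup.mk' N (root m ℓ) :=
    (Monoid.CoprodI.lift_of ..).trans (zmodPowersHom_ofAdd_one ..)
  have hback : back.comp (toFreeProd m ℓ) = QuotientGroup.mk' N := by
    refine SemidirectProduct.hom_ext (hom_ext fun i => ?_) (MonoidHom.ext fun j => ?_)
    · change back (toFreeProd m ℓ (incl m ℓ (circGen m ℓ i))) =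
        QuotientGroup.mk' N (incl m ℓ (circGen m ℓ i))
      simp only [incl_circGen, map_mul, map_inv, toFreeProd_rot, toFreeProd_root, hM, hL]
    · change back (toFreeProd m ℓ (rot m ℓ j)) = QuotientGroup.mk' N (rot m ℓ j)
      rw [toFreeProd_rot, hM]
  have h := DFunLike.congr_fun hback y
  rw [MonoidHom.comp_apply, hy, map_one] at h
  exact (QuotientGroup.eq_one_iff y).mp h.symm

theorem eq_root_zpow_of_commute (hm : 0 < m) {n : ℤ} (hn : ¬ (ℓ : ℤ) ∣ n) {y : Extended m ℓ}
    (hy : Commute (root m ℓ ^ n) y) : ∃ e : ℤ, y = root m ℓ ^ e := by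
  have h := hy.map (toFreeProd m ℓ)
  rw [map_zpow, toFreeProd_root, factorL_one_zpow] at h
  have hne : (Multiplicative.ofAdd (n : ZMod ℓ)) ≠ 1 := fun h1 =>
    hn ((ZMod.intCast_zmod_eq_zero_iff_dvd n ℓ).mp (ofAdd_eq_one.mp h1))
  obtain ⟨c, hc⟩ : ∃ c : Multiplicative (ZMod ℓ), toFreeProd m ℓ y = factorL m ℓ c :=
    Monoid.CoprodI.mem_range_of_of_commute
      (G := fun b : Bool => Multiplicative (ZMod (cond b ℓ m))) (i := true) hne h
  obtain ⟨c', hc'⟩ := ZMod.intCast_surjective c.toAdd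
  have h1 : toFreeProd m ℓ (y * (root m ℓ ^ c')⁻¹) = 1 := by
    rw [map_mul, map_inv, map_zpow, toFreeProd_root, factorL_one_zpow, hc, hc', ofAdd_toAdd,
      mul_inv_cancel]
  obtain ⟨e, he⟩ := Subgroup.mem_zpowers_iff.mp (mem_zpowers_of_toFreeProd_eq_one hm h1)
  refine ⟨ℓ * e + c', ?_⟩
  rw [zpow_add, zpow_mul, zpow_natCast, he, inv_mul_cancel_right]

theorem rightHom_root_zpow (e : ℤ) :
    SemidirectProduct.rightHom (root m ℓ ^ e) = Multiplicative.ofAdd (e : ZMod m) := by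
  rw [map_zpow, root, map_mul, SemidirectProduct.rightHom_inl, SemidirectProduct.rightHom_inr,
    one_mul, ← ofAdd_zsmul, zsmul_one]

theorem incl_circS_full (i : ZMod m) :
    incl m ℓ (circS m ℓ i m) =
      rot m ℓ (.ofAdd i) * root m ℓ ^ m * (rot m ℓ (.ofAdd i))⁻¹ := by
  rw [incl_circS, ZMod.natCast_self, add_zero]

theorem incl_periodic (hm : 0 < m) {k : ℤ} {p : ℕ} (hper : (m : ℤ) ∣ k * ℓ + p) :
    incl m ℓ (circDelta m ℓ ^ k * circS m ℓ 0 p) =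
      rot m ℓ (.ofAdd (p : ZMod m)) * root m ℓ ^ (k * ℓ + p) *
        (rot m ℓ (.ofAdd (p : ZMod m)))⁻¹ := by
  have hk : -(k * (ℓ : ZMod m)) = p := by
    have h := (ZMod.intCast_zmod_eq_zero_iff_dvd _ m).mpr hper
    push_cast at h
    exact neg_eq_of_add_eq_zero_right h
  have hrot : (rot m ℓ (.ofAdd (ℓ : ZMod m)))⁻¹ ^ k = rot m ℓ (.ofAdd (p : ZMod m)) := by
    rw [inv_zpow, ← map_zpow, ← map_inv, ← ofAdd_zsmul, ← ofAdd_neg, zsmul_eq_mul, hk]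
  rw [map_mul, map_zpow, circDelta, incl_circS, incl_circS, zero_add, zero_add, ofAdd_zero,
    map_one, one_mul, one_mul, (root_pow_commute hm _).mul_zpow, hrot,
    ((root_pow_commute hm _).zpow_left k).eq, zpow_add, mul_comm k, zpow_mul, zpow_natCast,
    zpow_natCast]
  group

end CircularGroup

/-- The centralizer of the periodic element `x = Δ^k s(0,p)` (where `0 < p < ℓ` and
`m ∣ kℓ + p`) is the set of integer powers of `s(p,m)`. -/
theorem centralizer_periodic_circular (m ℓ : ℕ) (hm : 0 < m) (hℓ : 0 < ℓ)
    (k : ℤ) (p : ℕ) (hp : 0 < p) (hpℓ : p < ℓ) (hper : (m : ℤ) ∣ k * ℓ + p) :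
    Subgroup.centralizer {(circDelta m ℓ) ^ k * circS m ℓ 0 p} =
      Subgroup.zpowers (circS m ℓ (p : ZMod m) m) := by
  have hn : ¬ (ℓ : ℤ) ∣ k * ℓ + p := fun h => by
    have h' : (ℓ : ℤ) ∣ p := (Int.dvd_add_right (Dvd.intro_left k rfl)).mp h
    exact absurd (Nat.le_of_dvd hp (Int.natCast_dvd_natCast.mp h')) hpℓ.not_ge
  set t := CircularGroup.rot m ℓ (.ofAdd (p : ZMod m)) with ht
  set u := CircularGroup.root m ℓ with hu
  have hx := CircularGroup.incl_periodic hm hper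
  have hs := CircularGroup.incl_circS_full (ℓ := ℓ) (p : ZMod m)
  rw [← ht, ← hu] at hx hs
  refine le_antisymm (fun y hy => ?_) ?_
  · have hc := congrArg (CircularGroup.incl m ℓ)
      (Subgroup.mem_centralizer_singleton_iff.mp hy)
    rw [map_mul _ y, map_mul _ _ y, hx] at hc
    obtain ⟨e, he⟩ := CircularGroup.eq_root_zpow_of_commute hm hn
      (y := t⁻¹ * CircularGroup.incl m ℓ y * t) (by
        have h := congrArg (t⁻¹ * · * t) hc
        simp only [mul_assoc, inv_mul_cancel_left, inv_mul_cancel, mul_one] at h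
        simpa only [Commute, SemiconjBy, mul_assoc] using h.symm)
    have hr := congrArg SemidirectProduct.rightHom he
    rw [CircularGroup.rightHom_root_zpow, map_mul, map_mul, SemidirectProduct.rightHom_inl,
      mul_one, ← map_mul, inv_mul_cancel, map_one, eq_comm, ofAdd_eq_one,
      ZMod.intCast_zmod_eq_zero_iff_dvd] at hr
    obtain ⟨q, rfl⟩ := hr
    refine Subgroup.mem_zpowers_iff.mpr ⟨q,
      SemidirectProduct.inl_injective (φ := CircularGroup.shift m ℓ) ?_⟩
    rw [map_zpow, hs, conj_zpow, ← zpow_natCast, ← zpow_mul, hu, ← he]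
    group
  · rw [Subgroup.zpowers_le, Subgroup.mem_centralizer_singleton_iff]
    refine SemidirectProduct.inl_injective (φ := CircularGroup.shift m ℓ) ?_
    rw [map_mul _ (circS m ℓ p m), map_mul _ _ (circS m ℓ p m), hx, hs, ← zpow_natCast]
    simp only [mul_assoc, inv_mul_cancel_left]
    rw [← mul_assoc (u ^ _), ← mul_assoc (u ^ _), ← zpow_add, ← zpow_add, add_comm]
end

section
/- Let G be the hosohedral-type group associated to pairs (m_1,ℓ_1),…,(m_h,ℓ_h), let Δ be the common image of the s_j(0,ℓ_j), let p be a nonzero integer and q an integer, and let x, y ∈ G satisfy x^p = Δ^q and y^p = Δ^q. Then x and y are conjugate in G if and only if there exists j ∈ {1,…,h} such that some conjugate of x and some conjugate of y both lie in the j-th factor subgroup of G. -/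
/-- The word `a_{j,i} a_{j,i+1} ⋯ a_{j,i+p-1}` (second indices mod `m j`) in the free group
on the disjoint union of the `ZMod (m j)`. -/
def hosoWord (h : ℕ) (m : Fin h → ℕ) (j : Fin h) (i : ZMod (m j)) (p : ℕ) :
    FreeGroup (Σ j : Fin h, ZMod (m j)) :=
  ((List.range p).map (fun k => FreeGroup.of ⟨j, i + (k : ZMod (m j))⟩)).prod

/-- The defining relations of the hosohedral-type group associated to the pairs
`(m j, ℓ j)`: the circular relations `s_j(i, ℓ j) = s_j(i+1, ℓ j)` within each factor,
together with the identifications `s_j(0, ℓ j) = s_j'(0, ℓ j')` of the Garside elements. -/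
def hosoRels (h : ℕ) (m ℓ : Fin h → ℕ) : Set (FreeGroup (Σ j : Fin h, ZMod (m j))) :=
  { r | (∃ (j : Fin h) (i : ZMod (m j)),
          r = hosoWord h m j i (ℓ j) * (hosoWord h m j (i + 1) (ℓ j))⁻¹) ∨
        (∃ j j' : Fin h, r = hosoWord h m j 0 (ℓ j) * (hosoWord h m j' 0 (ℓ j'))⁻¹) }

/-- The hosohedral-type group associated to the pairs `(m j, ℓ j)`. -/
abbrev HosoGroup (h : ℕ) (m ℓ : Fin h → ℕ) := PresentedGroup (hosoRels h m ℓ)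

/-- The generator `a_{j,i}` of the hosohedral-type group. -/
def hosoGen (h : ℕ) (m ℓ : Fin h → ℕ) (j : Fin h) (i : ZMod (m j)) : HosoGroup h m ℓ :=
  PresentedGroup.of ⟨j, i⟩

/-- The element `s_j(i,p) = a_{j,i} a_{j,i+1} ⋯ a_{j,i+p-1}` of the hosohedral-type group. -/
def hosoS (h : ℕ) (m ℓ : Fin h → ℕ) (j : Fin h) (i : ZMod (m j)) (p : ℕ) :
    HosoGroup h m ℓ :=
  ((List.range p).map (fun k => hosoGen h m ℓ j (i + (k : ZMod (m j))))).prod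

/-- The Garside element `Δ` of the hosohedral-type group, as the image of `s_j(0, ℓ j)`
(this is independent of `j` by the defining relations). -/
def hosoDelta (h : ℕ) (m ℓ : Fin h → ℕ) (j : Fin h) : HosoGroup h m ℓ :=
  hosoS h m ℓ j 0 (ℓ j)

/-- The `j`-th factor subgroup of the hosohedral-type group, generated by the
generators `a_{j,0}, …, a_{j, m_j - 1}`. -/
def hosoFactor (h : ℕ) (m ℓ : Fin h → ℕ) (j : Fin h) : Subgroup (HosoGroup h m ℓ) :=
  Subgroup.closure (Set.range (hosoGen h m ℓ j))

namespace Monoid.PushoutI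

variable {ι : Type*} {G : ι → Type*} {H : Type*} [∀ i, Group (G i)] [Group H]
  {φ : ∀ i, H →* G i}

/-- The element of the amalgamated product spelled by a list of letters. -/
def listProd (φ : ∀ i, H →* G i) (L : List (Σ i, G i)) : PushoutI φ :=
  (L.map fun g => of g.1 g.2).prod

theorem listProd_append (L M : List (Σ i, G i)) :
    listProd φ (L ++ M) = listProd φ L * listProd φ M := by
  simp [listProd]

theorem listProd_cons (g : Σ i, G i) (L : List (Σ i, G i)) :
    listProd φ (g :: L) = of g.1 g.2 * listProd φ L := by
  simp [listProd]

theorem listProd_flatten_replicate (L : List (Σ i, G i)) (n : ℕ) :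
    listProd φ (List.replicate n L).flatten = listProd φ L ^ n := by
  induction n with
  | zero => simp [listProd]
  | succ n ih => rw [List.replicate_succ, List.flatten_cons, listProd_append, ih, pow_succ']

theorem exists_listProd_eq [Nonempty ι] (x : PushoutI φ) : ∃ L, listProd φ L = x := by
  induction x using induction_on with
  | of i g => exact ⟨[⟨i, g⟩], by simp [listProd]⟩
  | base h =>
    obtain ⟨i⟩ := ‹Nonempty ι›
    exact ⟨[⟨i, φ i h⟩], by simp [listProd, of_apply_eq_base]⟩
  | mul x y hx hy =>
    obtain ⟨L, rfl⟩ := hx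
    obtain ⟨M, rfl⟩ := hy
    exact ⟨L ++ M, listProd_append L M⟩

theorem isConj_listProd_append_comm (L M : List (Σ i, G i)) :
    IsConj (listProd φ (L ++ M)) (listProd φ (M ++ L)) := by
  rw [listProd_append, listProd_append, isConj_iff]
  exact ⟨(listProd φ L)⁻¹, by group⟩

/-- A nonempty alternating list of letters outside the base group does not spell an element of
the base group. -/
theorem listProd_notMem_range_base (hφ : ∀ i, Function.Injective (φ i)) {L : List (Σ i, G i)}
    (hL : L ≠ []) (hred : ∀ g ∈ L, g.2 ∉ (φ g.1).range)
    (hchain : L.IsChain fun g g' => g.1 ≠ g'.1) : listProd φ L ∉ (base φ).range := by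
  intro hmem
  let w : CoprodI.Word G := ⟨L, fun g hg h1 => hred g hg (h1 ▸ one_mem _), hchain⟩
  have hw : Reduced φ w := hred
  have hprod : ofCoprodI w.prod = listProd φ L := by
    simp [CoprodI.Word.prod, listProd, w, map_list_prod, Function.comp_def]
  have := hw.eq_empty_of_mem_range hφ (hprod ▸ hmem)
  exact hL (congrArg CoprodI.Word.toList this)

/-- An element of an amalgamated product with a nontrivial power which is central and lies in the
base group is conjugate into one of the factors. -/
theorem exists_isConj_of_of_zpow_mem [Nonempty ι]
    (hφ : ∀ i, Function.Injective (φ i)) {x : PushoutI φ} {p : ℤ} (hp : p ≠ 0)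
    (hcenter : x ^ p ∈ Subgroup.center (PushoutI φ)) (hrange : x ^ p ∈ (base φ).range) :
    ∃ (i : ι) (g : G i), IsConj x (of i g) := by
  classical
  obtain ⟨n, hn, hbase⟩ : ∃ n : ℕ, n ≠ 0 ∧ ∀ y, IsConj x y → y ^ n ∈ (base φ).range := by
    refine ⟨p.natAbs, Int.natAbs_ne_zero.2 hp, fun y hxy => ?_⟩
    obtain ⟨c, rfl⟩ := isConj_iff.1 hxy
    have hpow : (c * x * c⁻¹) ^ p ∈ (base φ).range := by
      rw [conj_zpow, Subgroup.mem_center_iff.1 hcenter, mul_inv_cancel_right]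
      exact hrange
    rw [← zpow_natCast]
    rcases Int.natAbs_eq p with h | h
    · rwa [← h]
    · rw [h, zpow_neg, inv_mem_iff] at hpow
      exact hpow
  have hex : ∃ k, ∃ L : List (Σ i, G i), L.length = k ∧ IsConj x (listProd φ L) := by
    obtain ⟨L, rfl⟩ := exists_listProd_eq x
    exact ⟨_, L, rfl, IsConj.refl _⟩
  obtain ⟨L, hlen, hconj⟩ := Nat.find_spec hex
  have hmin : ∀ M : List (Σ i, G i), IsConj x (listProd φ M) → L.length ≤ M.length :=
    fun M hM => hlen ▸ Nat.find_min' hex ⟨M, rfl, hM⟩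
  match hL : L with
  | [] =>
    obtain ⟨i⟩ := ‹Nonempty ι›
    exact ⟨i, 1, by simpa [listProd] using hconj⟩
  | [g] => exact ⟨g.1, g.2, by simpa [listProd] using hconj⟩
  | g₀ :: g₁ :: L₀ =>
    exfalso
    rw [← hL] at hconj hmin
    have hrot : ∀ a b s, L.length = (a :: b :: s).length →
        IsConj x (listProd φ (a :: b :: s)) → a.1 ≠ b.1 ∧ a.2 ∉ (φ a.1).range := by
      rintro ⟨i, a⟩ ⟨j, b⟩ s hs hx
      constructor
      · rintro (rfl : i = j)
        have := hmin (⟨i, a * b⟩ :: s) (by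
          simpa [listProd_cons, mul_assoc] using hx)
        simp at hs this
        omega
      · rintro ⟨c, rfl : φ i c = a⟩
        have := hmin (⟨j, φ j c * b⟩ :: s) (by
          simpa [listProd_cons, mul_assoc, of_apply_eq_base] using hx)
        simp at hs this
        omega
    have hne : L ≠ [] := by simp [hL]
    have hred : ∀ g ∈ L, g.2 ∉ (φ g.1).range := by
      intro g hg
      obtain ⟨s, t, hst⟩ := List.append_of_mem hg
      have hx := hconj.trans (hst ▸ isConj_listProd_append_comm s (g :: t))
      cases hts : t ++ s with
      | nil =>
        have : L.length = 1 := by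
          rw [hst, List.append_eq_nil_iff.1 hts |>.1, List.append_eq_nil_iff.1 hts |>.2]
          rfl
        simp [hL] at this
      | cons b r =>
        rw [List.cons_append, hts] at hx
        refine (hrot g b r ?_ hx).2
        rw [← hts, hst]
        simp
        omega
    have hchain : L.IsChain fun g g' => g.1 ≠ g'.1 := by
      rw [List.isChain_iff_forall_rel_of_append_cons_cons]
      intro a b s t hst
      have hx := hconj.trans (hst ▸ isConj_listProd_append_comm s (a :: b :: t))
      refine (hrot a b (t ++ s) ?_ hx).1
      rw [hst]
      simp
      omega
    have hends : ∀ᵉ (a ∈ L.getLast?) (b ∈ L.head?), a.1 ≠ b.1 := by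
      intro a ha b hb
      obtain rfl : b = g₀ := by simpa [hL, eq_comm] using hb
      have hinit : L = L.dropLast ++ [a] := (List.dropLast_append_getLast? a ha).symm
      have hdrop : L.dropLast = b :: (g₁ :: L₀).dropLast := by simp [hL]
      rw [hdrop] at hinit
      have hx := hconj.trans (hinit ▸ isConj_listProd_append_comm _ [a])
      refine (hrot a b (g₁ :: L₀).dropLast ?_ hx).1
      rw [hinit]
      simp
    have hpow := hbase _ hconj
    rw [← listProd_flatten_replicate] at hpow
    refine listProd_notMem_range_base hφ ?_ ?_ ?_ hpow
    · simp [hn, hne]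
    · intro g hg
      simp only [List.mem_flatten, List.mem_replicate] at hg
      obtain ⟨_, ⟨-, rfl⟩, hg⟩ := hg
      exact hred g hg
    · rw [List.isChain_flatten (by simp [hne.symm])]
      exact ⟨by simpa [hn] using hchain, List.isChain_replicate_of_rel _ hends⟩

theorem base_mem_center {c : H} (hc : c ∈ Subgroup.center H)
    (h : ∀ i, φ i c ∈ Subgroup.center (G i)) : base φ c ∈ Subgroup.center (PushoutI φ) := by
  rw [Subgroup.mem_center_iff]
  intro x
  induction x using induction_on with
  | of i g => rw [← of_apply_eq_base φ i, ← map_mul, ← map_mul, Subgroup.mem_center_iff.1 (h i)]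
  | base k => rw [← map_mul, ← map_mul, Subgroup.mem_center_iff.1 hc]
  | mul x y hx hy => rw [mul_assoc, hy, ← mul_assoc, hx, mul_assoc]

end Monoid.PushoutI

section TwistedProduct

variable {K : Type*} [Group K]

/-- The homomorphism `(a, b) ↦ u ^ a * v ^ b` given by a commuting pair `u`, `v`. -/
def commutePairHom (u v : K) (huv : Commute u v) : Multiplicative (ℤ × ℤ) →* K :=
  MonoidHom.mk' (fun c => u ^ c.toAdd.1 * v ^ c.toAdd.2) fun c d => by
    have := (huv.zpow_zpow d.toAdd.1 c.toAdd.2).eq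
    simp only [toAdd_mul, Prod.fst_add, Prod.snd_add, zpow_add]
    rw [mul_assoc, mul_assoc, ← mul_assoc (u ^ d.toAdd.1), this]
    simp only [mul_assoc]

theorem commutePairHom_ofAdd (u v : K) (huv : Commute u v) (a b : ℤ) :
    commutePairHom u v huv (Multiplicative.ofAdd (a, b)) = u ^ a * v ^ b := rfl

theorem prod_map_range_conj (t b : K) (i : ℤ) (p : ℕ) :
    ((List.range p).map fun k : ℕ => t ^ (i + k) * b * t ^ (-(i + k) - 1)).prod =
      t ^ i * b ^ p * t ^ (-(i + p)) := by
  induction p with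
  | zero => simp
  | succ p ih =>
    rw [List.range_succ, List.map_append, List.prod_append, ih, pow_succ]
    simp only [List.map_cons, List.map_nil, List.prod_cons, List.prod_nil, mul_one, mul_assoc]
    rw [← mul_assoc (t ^ (-(i + (p : ℤ)))), ← zpow_add]
    simp
    ring_nf

theorem conj_eq_of_intCast_eq {t b : K} {m : ℕ} (hb : Commute (t ^ m) b) {n n' : ℤ}
    (h : (n : ZMod m) = n') : t ^ n * b * t ^ (-n - 1) = t ^ n' * b * t ^ (-n' - 1) := by
  obtain ⟨k, hk⟩ := (ZMod.intCast_eq_intCast_iff_dvd_sub n n' m).1 h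
  have hc : t ^ (m * k : ℤ) * b = b * t ^ (m * k : ℤ) := by
    rw [zpow_mul, zpow_natCast]
    exact (hb.zpow_left k).eq
  obtain rfl : n' = n + m * k := by omega
  rw [zpow_add, mul_assoc (t ^ n) _ b, hc, ← mul_assoc, mul_assoc _ (t ^ (m * k : ℤ)), ← zpow_add]
  congr 2
  ring

end TwistedProduct

section Hoso

open Multiplicative

variable {h : ℕ} {m ℓ : Fin h → ℕ}

theorem hosoS_eq_prod (j : Fin h) (i : ZMod (m j)) (p : ℕ) :
    hosoS h m ℓ j i p = ((List.range p).map fun k : ℕ => hosoGen h m ℓ j (i + k)).prod := by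
  simp [hosoS, ← List.map_eq_flatMap, Function.comp_def]

theorem mk_hosoWord (j : Fin h) (i : ZMod (m j)) (p : ℕ) :
    PresentedGroup.mk (hosoRels h m ℓ) (hosoWord h m j i p) = hosoS h m ℓ j i p := by
  simp only [hosoWord, hosoS_eq_prod, map_list_prod, List.map_map]
  rfl

theorem hosoS_add_one (j : Fin h) (i : ZMod (m j)) :
    hosoS h m ℓ j (i + 1) (ℓ j) = hosoS h m ℓ j i (ℓ j) := by
  rw [← mk_hosoWord, ← mk_hosoWord]
  exact (PresentedGroup.mk_eq_mk_of_mul_inv_mem (Or.inl ⟨j, i, rfl⟩)).symm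

theorem hosoS_eq_hosoDelta (j j₀ : Fin h) (i : ZMod (m j)) :
    hosoS h m ℓ j i (ℓ j) = hosoDelta h m ℓ j₀ := by
  have hzero : hosoS h m ℓ j 0 (ℓ j) = hosoDelta h m ℓ j₀ := by
    rw [hosoDelta, ← mk_hosoWord, ← mk_hosoWord]
    exact PresentedGroup.mk_eq_mk_of_mul_inv_mem (Or.inr ⟨j, j₀, rfl⟩)
  obtain ⟨n, rfl⟩ := ZMod.intCast_surjective i
  induction n using Int.induction_on with
  | zero => simpa using hzero
  | succ n ih => rw [Int.cast_add, Int.cast_one, hosoS_add_one, ih]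
  | pred n ih => rw [← hosoS_add_one]; simpa using ih

/-- The universal property of the hosohedral-type group. -/
def hosoLift {K : Type*} [Group K] (f : ∀ j, ZMod (m j) → K) (D : K)
    (hD : ∀ j i, ((List.range (ℓ j)).map fun k : ℕ => f j (i + k)).prod = D) :
    HosoGroup h m ℓ →* K :=
  PresentedGroup.toGroup (f := fun g : Σ j : Fin h, ZMod (m j) => f g.1 g.2) <| by
    have hword : ∀ j i, FreeGroup.lift (fun g : Σ j : Fin h, ZMod (m j) => f g.1 g.2)
        (hosoWord h m j i (ℓ j)) = D := by
      intro j i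
      rw [← hD j i]
      simp [hosoWord, map_list_prod, Function.comp_def]
    rintro r (⟨j, i, rfl⟩ | ⟨j, j', rfl⟩) <;> simp [hword]

theorem hosoLift_hosoGen {K : Type*} [Group K] (f : ∀ j, ZMod (m j) → K) (D : K)
    (hD : ∀ j i, ((List.range (ℓ j)).map fun k : ℕ => f j (i + k)).prod = D)
    (j : Fin h) (i : ZMod (m j)) : hosoLift f D hD (hosoGen h m ℓ j i) = f j i :=
  PresentedGroup.toGroup.of _

theorem hosoHom_ext {K : Type*} [Group K] {f g : HosoGroup h m ℓ →* K}
    (hfg : ∀ j i, f (hosoGen h m ℓ j i) = g (hosoGen h m ℓ j i)) : f = g :=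
  PresentedGroup.ext fun x => hfg x.1 x.2

theorem map_hosoS {K : Type*} [Group K] (f : HosoGroup h m ℓ →* K) (j : Fin h) (i : ZMod (m j))
    (p : ℕ) : f (hosoS h m ℓ j i p) =
      ((List.range p).map fun k : ℕ => f (hosoGen h m ℓ j (i + k))).prod := by
  simp [hosoS_eq_prod, map_list_prod, Function.comp_def]

theorem hosoS_mem_hosoFactor (j : Fin h) (i : ZMod (m j)) (p : ℕ) :
    hosoS h m ℓ j i p ∈ hosoFactor h m ℓ j := by
  rw [hosoS_eq_prod]
  refine list_prod_mem fun x hx => ?_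
  obtain ⟨k, -, rfl⟩ := List.mem_map.1 hx
  exact Subgroup.subset_closure ⟨_, rfl⟩

/-- The endomorphism shifting the second index of every generator by `c`. -/
def hosoShift (m ℓ : Fin h → ℕ) (j₀ : Fin h) (c : ℤ) : HosoGroup h m ℓ →* HosoGroup h m ℓ :=
  hosoLift (fun j i => hosoGen h m ℓ j (i + (c : ZMod (m j)))) (hosoDelta h m ℓ j₀) fun j i => by
    rw [← hosoS_eq_hosoDelta j j₀ (i + (c : ZMod (m j))), hosoS_eq_prod]
    simp only [add_right_comm]

theorem hosoShift_hosoGen (j₀ : Fin h) (c : ℤ) (j : Fin h) (i : ZMod (m j)) :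
    hosoShift m ℓ j₀ c (hosoGen h m ℓ j i) = hosoGen h m ℓ j (i + c) :=
  hosoLift_hosoGen _ _ _ j i

/-- The automorphism `a_{j,i} ↦ a_{j,i+1}`. -/
def hosoRotation (m ℓ : Fin h → ℕ) (j₀ : Fin h) : MulAut (HosoGroup h m ℓ) :=
  MonoidHom.toMulEquiv (hosoShift m ℓ j₀ 1) (hosoShift m ℓ j₀ (-1))
    (hosoHom_ext fun j i => by simp [hosoShift_hosoGen])
    (hosoHom_ext fun j i => by simp [hosoShift_hosoGen])

theorem hosoRotation_hosoGen (j₀ j : Fin h) (i : ZMod (m j)) :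
    hosoRotation m ℓ j₀ (hosoGen h m ℓ j i) = hosoGen h m ℓ j (i + 1) := by
  exact (hosoShift_hosoGen j₀ 1 j i).trans (by rw [Int.cast_one])

theorem hosoRotation_zpow_hosoGen (j₀ : Fin h) (n : ℤ) (j : Fin h) (i : ZMod (m j)) :
    (hosoRotation m ℓ j₀ ^ n) (hosoGen h m ℓ j i) = hosoGen h m ℓ j (i + n) := by
  induction n using Int.induction_on generalizing i with
  | zero => simp
  | succ n ih =>
    rw [zpow_add_one, MulAut.mul_apply, hosoRotation_hosoGen, ih]
    push_cast
    congr 1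
    ring
  | pred n ih =>
    have hi : hosoGen h m ℓ j i = hosoRotation m ℓ j₀ (hosoGen h m ℓ j (i - 1)) := by
      rw [hosoRotation_hosoGen, sub_add_cancel]
    rw [zpow_sub_one, MulAut.mul_apply, hi, MulAut.inv_apply_self, ih]
    push_cast
    congr 1
    ring

theorem hosoRotation_zpow_hosoS (j₀ : Fin h) (n : ℤ) (j : Fin h) (i : ZMod (m j)) (p : ℕ) :
    (hosoRotation m ℓ j₀ ^ n) (hosoS h m ℓ j i p) = hosoS h m ℓ j (i + n) p := by
  have := map_hosoS (hosoRotation m ℓ j₀ ^ n).toMonoidHom j i p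
  simp only [MulEquiv.toMonoidHom_eq_coe, MonoidHom.coe_coe, hosoRotation_zpow_hosoGen] at this
  rw [this, hosoS_eq_prod]
  simp only [add_right_comm]

theorem hosoRotation_zpow_hosoDelta (j₀ : Fin h) (n : ℤ) :
    (hosoRotation m ℓ j₀ ^ n) (hosoDelta h m ℓ j₀) = hosoDelta h m ℓ j₀ := by
  rw [hosoDelta, hosoRotation_zpow_hosoS]
  exact hosoS_eq_hosoDelta j₀ j₀ _

/-- Full turns `s_j(i, m_j)` with different starting points are conjugate. -/
theorem isConj_hosoS_period (j : Fin h) (i i' : ZMod (m j)) :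
    IsConj (hosoS h m ℓ j i (m j)) (hosoS h m ℓ j i' (m j)) := by
  have hstep : ∀ i : ZMod (m j),
      IsConj (hosoS h m ℓ j i (m j)) (hosoS h m ℓ j (i + 1) (m j)) := by
    intro i
    rw [isConj_iff]
    refine ⟨(hosoGen h m ℓ j i)⁻¹, ?_⟩
    have hsucc : hosoS h m ℓ j i (m j + 1) = hosoGen h m ℓ j i * hosoS h m ℓ j (i + 1) (m j) := by
      simp [hosoS_eq_prod, List.range_succ_eq_map, Function.comp_def, add_assoc,
        add_comm (1 : ZMod (m j))]
    have hsucc' : hosoS h m ℓ j i (m j + 1) = hosoS h m ℓ j i (m j) * hosoGen h m ℓ j i := by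
      simp [hosoS_eq_prod, List.range_succ]
    rw [inv_inv, mul_assoc, ← hsucc', hsucc, inv_mul_cancel_left]
  have hzero : ∀ n : ℤ,
      IsConj (hosoS h m ℓ j 0 (m j)) (hosoS h m ℓ j (n : ZMod (m j)) (m j)) := by
    intro n
    induction n using Int.induction_on with
    | zero => rw [Int.cast_zero]
    | succ n ih => simpa using ih.trans (hstep _)
    | pred n ih =>
      refine ih.trans (IsConj.symm ?_)
      simpa using hstep ((-n - 1 : ℤ) : ZMod (m j))
  obtain ⟨n, rfl⟩ := ZMod.intCast_surjective i
  obtain ⟨k, rfl⟩ := ZMod.intCast_surjective i'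
  exact (hzero n).symm.trans (hzero k)

/-- The relations satisfied by a rotation `t`, the Garside element `D` and the elements
`b j = a_{j,0} t`. -/
structure IsHosoSystem (m ℓ : Fin h → ℕ) {K : Type*} [Group K] (t D : K) (b : Fin h → K) :
    Prop where
  commute_delta : Commute D t
  commute_pow : ∀ j, Commute (t ^ m j) (b j)
  pow_eq : ∀ j, b j ^ ℓ j = D * t ^ ℓ j

namespace IsHosoSystem

variable {K : Type*} [Group K] {t D : K} {b : Fin h → K}

theorem prod_map_range (hs : IsHosoSystem m ℓ t D b) (j : Fin h) (i : ZMod (m j)) (p : ℕ) :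
    ((List.range p).map fun k : ℕ => t ^ ((i + k : ZMod (m j)).cast : ℤ) * b j *
      t ^ (-((i + k : ZMod (m j)).cast : ℤ) - 1)).prod =
      t ^ (i.cast : ℤ) * b j ^ p * t ^ (-((i.cast : ℤ) + p)) := by
  rw [← prod_map_range_conj]
  refine congrArg List.prod (List.map_congr_left fun k _ => ?_)
  exact conj_eq_of_intCast_eq (hs.commute_pow j) (by simp)

/-- The homomorphism `a_{j,i} ↦ t ^ i (b_j t⁻¹) t ^ (-i)`. -/
def hom (hs : IsHosoSystem m ℓ t D b) : HosoGroup h m ℓ →* K :=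
  hosoLift (fun j i => t ^ (i.cast : ℤ) * b j * t ^ (-(i.cast : ℤ) - 1)) D fun j i => by
    have hc : Commute D (t ^ (i.cast : ℤ)) := hs.commute_delta.zpow_right _
    rw [hs.prod_map_range, hs.pow_eq, ← mul_assoc, ← hc.eq, mul_assoc, mul_assoc,
      ← zpow_natCast t, ← zpow_add, ← zpow_add]
    simp

theorem hom_hosoGen (hs : IsHosoSystem m ℓ t D b) (j : Fin h) (i : ZMod (m j)) :
    hs.hom (hosoGen h m ℓ j i) = t ^ (i.cast : ℤ) * b j * t ^ (-(i.cast : ℤ) - 1) :=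
  hosoLift_hosoGen _ _ _ j i

theorem hom_hosoS (hs : IsHosoSystem m ℓ t D b) (j : Fin h) (p : ℕ) :
    hs.hom (hosoS h m ℓ j 0 p) = b j ^ p * t ^ (-(p : ℤ)) := by
  rw [map_hosoS]
  simp only [hom_hosoGen]
  rw [hs.prod_map_range]
  simp

theorem hom_hosoDelta (hs : IsHosoSystem m ℓ t D b) (j : Fin h) :
    hs.hom (hosoDelta h m ℓ j) = D := by
  rw [hosoDelta, hom_hosoS, hs.pow_eq]
  simp

end IsHosoSystem

/-- The inclusions of the edge group `⟨b ^ ℓ, t ^ m⟩ ≅ ℤ²` into the vertex groups `⟨b, t ^ m⟩`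
(for `true`) and `⟨D, t⟩` (for `false`), where `b ^ ℓ = D t ^ ℓ`. -/
def circularEdge (m ℓ : ℕ) : Bool → (Multiplicative (ℤ × ℤ) →* Multiplicative (ℤ × ℤ))
  | true => commutePairHom (ofAdd ((ℓ : ℤ), 0)) (ofAdd (0, 1)) (Commute.all _ _)
  | false => commutePairHom (ofAdd (1, (ℓ : ℤ))) (ofAdd (0, (m : ℤ))) (Commute.all _ _)

theorem circularEdge_true (m ℓ : ℕ) (a c : ℤ) :
    circularEdge m ℓ true (ofAdd (a, c)) = ofAdd (a * ℓ, c) := by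
  simp [circularEdge, commutePairHom_ofAdd, ← ofAdd_zsmul, ← ofAdd_add]

theorem circularEdge_false (m ℓ : ℕ) (a c : ℤ) :
    circularEdge m ℓ false (ofAdd (a, c)) = ofAdd (a, a * ℓ + c * m) := by
  simp [circularEdge, commutePairHom_ofAdd, ← ofAdd_zsmul, ← ofAdd_add]

theorem circularEdge_injective {m ℓ : ℕ} (hm : 0 < m) (hℓ : 0 < ℓ) (e : Bool) :
    Function.Injective (circularEdge m ℓ e) := by
  refine (injective_iff_map_eq_one _).2 fun x hx => ?_
  obtain ⟨⟨a, c⟩, rfl⟩ := ofAdd.surjective x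
  cases e
  · rw [circularEdge_false, ofAdd_eq_one, Prod.mk_eq_zero] at hx
    obtain ⟨rfl, hx⟩ := hx
    simp [hm.ne'] at hx
    simp [hx]
  · rw [circularEdge_true, ofAdd_eq_one, Prod.mk_eq_zero] at hx
    obtain ⟨hx, rfl⟩ := hx
    simp [hℓ.ne'] at hx
    simp [hx]

/-- The group `⟨b, t ∣ b ^ ℓ commutes with t, t ^ m commutes with b⟩`, where
`D = b ^ ℓ t ^ (-ℓ)`. -/
def CircularAmalgam (m ℓ : ℕ) :=
  Monoid.PushoutI (G := fun _ : Bool => Multiplicative (ℤ × ℤ)) (circularEdge m ℓ)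

namespace CircularAmalgam

open Monoid

instance (m ℓ : ℕ) : Group (CircularAmalgam m ℓ) :=
  inferInstanceAs (Group (PushoutI (circularEdge m ℓ)))

/-- The inclusion of the vertex group `⟨b, t ^ m⟩`. -/
def vertex (m ℓ : ℕ) : Multiplicative (ℤ × ℤ) →* CircularAmalgam m ℓ :=
  PushoutI.of (G := fun _ : Bool => Multiplicative (ℤ × ℤ)) (φ := circularEdge m ℓ) true

/-- The inclusion of the vertex group `⟨D, t⟩`. -/
def base (m ℓ : ℕ) : Multiplicative (ℤ × ℤ) →* CircularAmalgam m ℓ :=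
  PushoutI.of (G := fun _ : Bool => Multiplicative (ℤ × ℤ)) (φ := circularEdge m ℓ) false

theorem base_circularEdge_eq (m ℓ : ℕ) (c : Multiplicative (ℤ × ℤ)) :
    base m ℓ (circularEdge m ℓ false c) = PushoutI.base (circularEdge m ℓ) c :=
  PushoutI.of_apply_eq_base (G := fun _ : Bool => Multiplicative (ℤ × ℤ)) _ false c

theorem vertex_circularEdge (m ℓ : ℕ) (c : Multiplicative (ℤ × ℤ)) :
    vertex m ℓ (circularEdge m ℓ true c) = base m ℓ (circularEdge m ℓ false c) :=
  (PushoutI.of_apply_eq_base (G := fun _ : Bool => Multiplicative (ℤ × ℤ)) _ true c).trans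
    (base_circularEdge_eq m ℓ c).symm

/-- The universal property of the circular amalgam. -/
def lift {m ℓ : ℕ} {K : Type*} [Group K] (u v : Multiplicative (ℤ × ℤ) →* K)
    (huv : ∀ c, u (circularEdge m ℓ true c) = v (circularEdge m ℓ false c)) :
    CircularAmalgam m ℓ →* K :=
  PushoutI.lift (φ := circularEdge m ℓ) (fun e => cond e u v)
    (v.comp (circularEdge m ℓ false)) fun e => MonoidHom.ext fun c => by
      cases e
      · rfl
      · exact huv c

theorem lift_vertex {m ℓ : ℕ} {K : Type*} [Group K] (u v : Multiplicative (ℤ × ℤ) →* K)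
    (huv : ∀ c, u (circularEdge m ℓ true c) = v (circularEdge m ℓ false c))
    (c : Multiplicative (ℤ × ℤ)) : lift u v huv (vertex m ℓ c) = u c :=
  PushoutI.lift_of (φ := circularEdge m ℓ) (fun e => cond e u v) _ _ (i := true) c

theorem lift_base {m ℓ : ℕ} {K : Type*} [Group K] (u v : Multiplicative (ℤ × ℤ) →* K)
    (huv : ∀ c, u (circularEdge m ℓ true c) = v (circularEdge m ℓ false c))
    (c : Multiplicative (ℤ × ℤ)) : lift u v huv (base m ℓ c) = v c :=
  PushoutI.lift_of (φ := circularEdge m ℓ) (fun e => cond e u v) _ _ (i := false) c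

theorem base_injective {m ℓ : ℕ} (hm : 0 < m) (hℓ : 0 < ℓ) : Function.Injective (base m ℓ) :=
  PushoutI.of_injective (circularEdge_injective hm hℓ) false

theorem base_circularEdge_mem_center (m ℓ : ℕ) (c : Multiplicative (ℤ × ℤ)) :
    base m ℓ (circularEdge m ℓ false c) ∈ Subgroup.center (CircularAmalgam m ℓ) := by
  rw [base_circularEdge_eq]
  exact PushoutI.base_mem_center (G := fun _ : Bool => Multiplicative (ℤ × ℤ))
    (Subgroup.mem_center_iff.2 fun _ => mul_comm _ _)
    fun _ => Subgroup.mem_center_iff.2 fun _ => mul_comm _ _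

theorem exists_isConj_of_zpow_eq {m ℓ : ℕ} (hm : 0 < m) (hℓ : 0 < ℓ) {x : CircularAmalgam m ℓ}
    {p : ℤ} (hp : p ≠ 0) {c : Multiplicative (ℤ × ℤ)}
    (hx : x ^ p = base m ℓ (circularEdge m ℓ false c)) :
    (∃ d, IsConj x (base m ℓ d)) ∨ ∃ d, IsConj x (vertex m ℓ d) := by
  obtain ⟨e, d, hd⟩ := PushoutI.exists_isConj_of_of_zpow_mem (x := x)
    (circularEdge_injective hm hℓ) hp
    (hx.symm ▸ base_circularEdge_mem_center m ℓ c :)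
    ⟨c, ((hx.trans (base_circularEdge_eq m ℓ c)).symm :)⟩
  cases e
  · exact Or.inl ⟨d, hd⟩
  · exact Or.inr ⟨d, hd⟩

end CircularAmalgam

/-- The amalgamated product of the circular amalgams over their common subgroup `⟨D, t⟩`. -/
def HosoAmalgam (m ℓ : Fin h → ℕ) :=
  Monoid.PushoutI (G := fun j : Fin h => CircularAmalgam (m j) (ℓ j))
    fun j => CircularAmalgam.base (m j) (ℓ j)

namespace HosoAmalgam

open Monoid

instance (m ℓ : Fin h → ℕ) : Group (HosoAmalgam m ℓ) :=
  inferInstanceAs (Group (PushoutI fun j => CircularAmalgam.base (m j) (ℓ j)))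

/-- The inclusion of the `j`-th circular amalgam. -/
def factor (m ℓ : Fin h → ℕ) (j : Fin h) : CircularAmalgam (m j) (ℓ j) →* HosoAmalgam m ℓ :=
  PushoutI.of (φ := fun j => CircularAmalgam.base (m j) (ℓ j)) j

/-- The inclusion of the vertex group `⟨D, t⟩`. -/
def base (m ℓ : Fin h → ℕ) : Multiplicative (ℤ × ℤ) →* HosoAmalgam m ℓ :=
  PushoutI.base fun j => CircularAmalgam.base (m j) (ℓ j)

/-- The inclusion of the vertex group `⟨b_j, t ^ m_j⟩`. -/
def vertex (m ℓ : Fin h → ℕ) (j : Fin h) : Multiplicative (ℤ × ℤ) →* HosoAmalgam m ℓ :=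
  (factor m ℓ j).comp (CircularAmalgam.vertex (m j) (ℓ j))

theorem factor_base (j : Fin h) (c : Multiplicative (ℤ × ℤ)) :
    factor m ℓ j (CircularAmalgam.base (m j) (ℓ j) c) = base m ℓ c :=
  PushoutI.of_apply_eq_base (fun j => CircularAmalgam.base (m j) (ℓ j)) j c

theorem vertex_circularEdge (j : Fin h) (c : Multiplicative (ℤ × ℤ)) :
    vertex m ℓ j (circularEdge (m j) (ℓ j) true c) =
      base m ℓ (circularEdge (m j) (ℓ j) false c) := by
  rw [vertex, MonoidHom.comp_apply, CircularAmalgam.vertex_circularEdge, factor_base]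

theorem factor_injective (hm : ∀ j, 0 < m j) (hℓ : ∀ j, 0 < ℓ j) (j : Fin h) :
    Function.Injective (factor m ℓ j) :=
  PushoutI.of_injective (fun j => CircularAmalgam.base_injective (hm j) (hℓ j)) j

theorem base_mem_center {c : Multiplicative (ℤ × ℤ)}
    (hc : ∀ j, ∃ d, circularEdge (m j) (ℓ j) false d = c) :
    base m ℓ c ∈ Subgroup.center (HosoAmalgam m ℓ) := by
  refine PushoutI.base_mem_center (Subgroup.mem_center_iff.2 fun _ => mul_comm _ _) fun j => ?_
  obtain ⟨d, rfl⟩ := hc j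
  exact CircularAmalgam.base_circularEdge_mem_center (m j) (ℓ j) d

theorem exists_isConj_factor (j₀ : Fin h) (hm : ∀ j, 0 < m j) (hℓ : ∀ j, 0 < ℓ j)
    {x : HosoAmalgam m ℓ} {p : ℤ} (hp : p ≠ 0) {c : Multiplicative (ℤ × ℤ)}
    (hx : x ^ p = base m ℓ c) (hc : base m ℓ c ∈ Subgroup.center (HosoAmalgam m ℓ)) :
    ∃ j g, IsConj x (factor m ℓ j g) :=
  have : Nonempty (Fin h) := ⟨j₀⟩
  PushoutI.exists_isConj_of_of_zpow_mem (x := x)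
    (fun j => CircularAmalgam.base_injective (hm j) (hℓ j)) hp
    (hx.symm ▸ hc :) ⟨c, (hx.symm :)⟩

theorem isHosoSystem (m ℓ : Fin h → ℕ) :
    IsHosoSystem m ℓ (base m ℓ (ofAdd (0, 1))) (base m ℓ (ofAdd (1, 0)))
      fun j => vertex m ℓ j (ofAdd (1, 0)) where
  commute_delta := (Commute.all _ _).map _
  commute_pow j := by
    have := vertex_circularEdge (m := m) (ℓ := ℓ) j (ofAdd (0, 1))
    rw [circularEdge_true, circularEdge_false] at this
    rw [← map_pow, ← ofAdd_nsmul]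
    simp only [Prod.smul_mk, smul_zero, nsmul_eq_mul, mul_one, zero_mul, zero_add, one_mul]
      at this ⊢
    rw [← this]
    exact (Commute.all _ _).map _
  pow_eq j := by
    have := vertex_circularEdge (m := m) (ℓ := ℓ) j (ofAdd (1, 0))
    rw [circularEdge_true, circularEdge_false] at this
    rw [← map_pow, ← ofAdd_nsmul, ← map_pow, ← ofAdd_nsmul, ← map_mul, ← ofAdd_add]
    simpa using this

section lift

variable {K : Type*} [Group K] {t D : K} {b : Fin h → K} (hs : IsHosoSystem m ℓ t D b)

/-- The restriction to the `j`-th circular amalgam of `HosoAmalgam.lift`. -/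
def liftFactor (j : Fin h) : CircularAmalgam (m j) (ℓ j) →* K :=
  CircularAmalgam.lift (commutePairHom (b j) (t ^ m j) (hs.commute_pow j).symm)
    (commutePairHom D t hs.commute_delta) fun x => by
      obtain ⟨⟨a, c⟩, rfl⟩ := ofAdd.surjective x
      rw [circularEdge_false, circularEdge_true, commutePairHom_ofAdd, commutePairHom_ofAdd,
        mul_comm a, zpow_mul, zpow_natCast, hs.pow_eq, (hs.commute_delta.pow_right _).mul_zpow,
        zpow_add, mul_comm c, zpow_mul, zpow_mul, zpow_natCast, zpow_natCast, mul_assoc]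

/-- The homomorphism out of the amalgam given by elements satisfying its relations. -/
def lift : HosoAmalgam m ℓ →* K :=
  PushoutI.lift (φ := fun j => CircularAmalgam.base (m j) (ℓ j)) (liftFactor hs)
    (commutePairHom D t hs.commute_delta)
    fun j => MonoidHom.ext fun c => by
      rw [MonoidHom.comp_apply, liftFactor, CircularAmalgam.lift_base]

theorem lift_vertex (j : Fin h) (a c : ℤ) :
    lift hs (vertex m ℓ j (ofAdd (a, c))) = b j ^ a * (t ^ m j) ^ c :=
  (PushoutI.lift_of (φ := fun j => CircularAmalgam.base (m j) (ℓ j)) (liftFactor hs) _ _ _).trans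
    (CircularAmalgam.lift_vertex _ _ _ _)

theorem lift_base (a c : ℤ) : lift hs (base m ℓ (ofAdd (a, c))) = D ^ a * t ^ c :=
  PushoutI.lift_base (φ := fun j => CircularAmalgam.base (m j) (ℓ j)) (liftFactor hs) _ _ _

theorem lift_hom (x : HosoGroup h m ℓ) : lift hs ((isHosoSystem m ℓ).hom x) = hs.hom x := by
  refine DFunLike.congr_fun (f := (lift hs).comp (isHosoSystem m ℓ).hom)
    (hosoHom_ext fun j i => ?_) x
  simp [IsHosoSystem.hom_hosoGen, lift_vertex, lift_base]

end lift

/-- Elements of the amalgam with a power equal to a power of `D` are conjugate into one of the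
vertex groups. -/
theorem exists_isConj_of_zpow_eq (j₀ : Fin h) (hm : ∀ j, 0 < m j) (hℓ : ∀ j, 0 < ℓ j)
    {x : HosoAmalgam m ℓ} {p q : ℤ} (hp : p ≠ 0) (hx : x ^ p = base m ℓ (ofAdd (q, 0))) :
    (∃ c, IsConj x (base m ℓ c)) ∨ ∃ j c, IsConj x (vertex m ℓ j c) := by
  set N : ℤ := ∏ j, (m j : ℤ)
  have hN : N ≠ 0 := Finset.prod_ne_zero_iff.2 fun j _ => by exact_mod_cast (hm j).ne'
  have hedge : ∀ j, ∃ c, circularEdge (m j) (ℓ j) false c = ofAdd (q * N, 0) := by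
    intro j
    obtain ⟨d, hd⟩ : (m j : ℤ) ∣ N := Finset.dvd_prod_of_mem _ (Finset.mem_univ j)
    refine ⟨ofAdd (q * N, -(q * d * ℓ j)), ?_⟩
    rw [circularEdge_false, hd]
    congr 2
    ring
  have hpN : p * N ≠ 0 := mul_ne_zero hp hN
  have hxN : x ^ (p * N) = base m ℓ (ofAdd (q * N, 0)) := by
    rw [zpow_mul, hx, ← map_zpow, ← ofAdd_zsmul]
    simp [mul_comm]
  have hcenter := base_mem_center hedge
  obtain ⟨j, g, hg⟩ := exists_isConj_factor j₀ hm hℓ hpN hxN hcenter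
  obtain ⟨c, hc⟩ := hedge j
  have hgN : g ^ (p * N) =
      CircularAmalgam.base (m j) (ℓ j) (circularEdge (m j) (ℓ j) false c) := by
    apply factor_injective hm hℓ j
    obtain ⟨u, hu⟩ := isConj_iff.1 hg
    rw [map_zpow, factor_base, hc, ← hu, conj_zpow, hxN, Subgroup.mem_center_iff.1 hcenter,
      mul_inv_cancel_right]
  rcases CircularAmalgam.exists_isConj_of_zpow_eq (hm j) (hℓ j) hpN hgN with ⟨d, hd⟩ | ⟨d, hd⟩
  · exact Or.inl ⟨d, factor_base (m := m) (ℓ := ℓ) j d ▸ hg.trans ((factor m ℓ j).map_isConj hd)⟩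
  · exact Or.inr ⟨j, d, hg.trans ((factor m ℓ j).map_isConj hd)⟩

end HosoAmalgam

/-- The semidirect product of the hosohedral-type group with the infinite cyclic group acting
by the rotation `a_{j,i} ↦ a_{j,i+1}`. -/
abbrev HosoHolomorph (m ℓ : Fin h → ℕ) (j₀ : Fin h) :=
  HosoGroup h m ℓ ⋊[zpowersHom (MulAut (HosoGroup h m ℓ)) (hosoRotation m ℓ j₀)] Multiplicative ℤ

namespace HosoHolomorph

open SemidirectProduct

/-- The generator of the infinite cyclic group acting by rotation. -/
def rotation (m ℓ : Fin h → ℕ) (j₀ : Fin h) : HosoHolomorph m ℓ j₀ := inr (ofAdd 1)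

variable (j₀ : Fin h)

theorem rotation_zpow (n : ℤ) : rotation m ℓ j₀ ^ n = inr (ofAdd n) := by
  rw [rotation, ← map_zpow, ← ofAdd_zsmul, smul_eq_mul, mul_one]

theorem rotation_zpow_conj (n : ℤ) (g : HosoGroup h m ℓ) :
    rotation m ℓ j₀ ^ n * inl g * rotation m ℓ j₀ ^ (-n) =
      inl ((hosoRotation m ℓ j₀ ^ n) g) := by
  rw [rotation_zpow, rotation_zpow, ofAdd_neg, ← inl_aut]
  simp

theorem rotation_zpow_conj_hosoGen (n : ℤ) (j : Fin h) :
    rotation m ℓ j₀ ^ n * (inl (hosoGen h m ℓ j 0) * rotation m ℓ j₀) *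
      rotation m ℓ j₀ ^ (-n - 1) = inl (hosoGen h m ℓ j n) := by
  have := rotation_zpow_conj j₀ n (hosoGen h m ℓ j 0)
  rw [hosoRotation_zpow_hosoGen, zero_add] at this
  rw [← this, sub_eq_add_neg, add_comm (-n), zpow_add]
  group

theorem isHosoSystem : IsHosoSystem m ℓ (rotation m ℓ j₀) (inl (hosoDelta h m ℓ j₀))
    fun j => inl (hosoGen h m ℓ j 0) * rotation m ℓ j₀ where
  commute_delta := by
    have := rotation_zpow_conj j₀ 1 (hosoDelta h m ℓ j₀)
    rw [hosoRotation_zpow_hosoDelta, zpow_one, zpow_neg_one, mul_inv_eq_iff_eq_mul] at this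
    exact this.symm
  commute_pow j := by
    have := rotation_zpow_conj j₀ (m j) (hosoGen h m ℓ j 0)
    rw [hosoRotation_zpow_hosoGen, zero_add, zpow_neg, mul_inv_eq_iff_eq_mul, zpow_natCast,
      Int.cast_natCast, ZMod.natCast_self] at this
    exact Commute.mul_right this ((Commute.refl _).pow_left _)
  pow_eq j := by
    have := prod_map_range_conj (rotation m ℓ j₀)
      (inl (hosoGen h m ℓ j 0) * rotation m ℓ j₀) 0 (ℓ j)
    simp only [rotation_zpow_conj_hosoGen] at this
    rw [← hosoS_eq_hosoDelta j j₀ 0, map_hosoS]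
    rw [zpow_zero, one_mul, zpow_neg, eq_mul_inv_iff_mul_eq, zero_add, zpow_natCast] at this
    rw [← this]
    simp

theorem isHosoSystem_hom (x : HosoGroup h m ℓ) : (isHosoSystem j₀).hom x = inl x := by
  refine DFunLike.congr_fun (hosoHom_ext fun j i => ?_) x
  rw [IsHosoSystem.hom_hosoGen, rotation_zpow_conj_hosoGen, ZMod.intCast_cast, ZMod.cast_id]

/-- Conjugacy in the semidirect product is conjugacy up to rotation. -/
theorem exists_isConj_rotation {x y : HosoGroup h m ℓ}
    (hxy : IsConj (inl x : HosoHolomorph m ℓ j₀) (inl y)) :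
    ∃ n : ℤ, IsConj x ((hosoRotation m ℓ j₀ ^ n) y) := by
  obtain ⟨c, hc⟩ := isConj_iff.1 hxy.symm
  obtain ⟨n, hn⟩ := ofAdd.surjective c.right
  refine ⟨n, (isConj_iff.2 ⟨c.left,
    inl_injective (φ := zpowersHom _ (hosoRotation m ℓ j₀)) ?_⟩).symm⟩
  rw [← hc, ← inl_left_mul_inr_right c, ← hn, map_mul, map_mul, ← rotation_zpow_conj,
    zpow_neg, rotation_zpow]
  simp [mul_assoc]

end HosoHolomorph

/-- A periodic element is conjugate to a power of the Garside element or of a full turn. -/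
theorem exists_isConj_of_zpow_eq_hosoDelta (j₀ : Fin h) (hm : ∀ j, 0 < m j) (hℓ : ∀ j, 0 < ℓ j)
    {p q : ℤ} (hp : p ≠ 0) {x : HosoGroup h m ℓ} (hx : x ^ p = hosoDelta h m ℓ j₀ ^ q) :
    (∃ k : ℤ, IsConj x (hosoDelta h m ℓ j₀ ^ k)) ∨
      ∃ (j : Fin h) (k : ℤ), IsConj x (hosoS h m ℓ j 0 (m j) ^ k) := by
  have hs := HosoHolomorph.isHosoSystem (m := m) (ℓ := ℓ) j₀
  have hpow : (HosoAmalgam.isHosoSystem m ℓ).hom x ^ p =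
      HosoAmalgam.base m ℓ (ofAdd (q, 0)) := by
    rw [← map_zpow, hx, map_zpow, IsHosoSystem.hom_hosoDelta, ← map_zpow, ← ofAdd_zsmul]
    simp
  have hlift : HosoAmalgam.lift hs ((HosoAmalgam.isHosoSystem m ℓ).hom x) =
      SemidirectProduct.inl x := by
    rw [HosoAmalgam.lift_hom, HosoHolomorph.isHosoSystem_hom]
  have hright : ∀ y, IsConj (SemidirectProduct.inl x : HosoHolomorph m ℓ j₀) y →
      SemidirectProduct.rightHom y = 1 := by
    intro y hy
    have := (SemidirectProduct.rightHom : HosoHolomorph m ℓ j₀ →* _).map_isConj hy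
    rwa [SemidirectProduct.rightHom_inl, isConj_one_right] at this
  rcases HosoAmalgam.exists_isConj_of_zpow_eq j₀ hm hℓ hp hpow with ⟨d, hd⟩ | ⟨j, d, hd⟩ <;>
    obtain ⟨⟨a, c⟩, rfl⟩ := ofAdd.surjective d <;>
    replace hd := (HosoAmalgam.lift hs).map_isConj hd
  · rw [hlift, HosoAmalgam.lift_base] at hd
    have hc : c = 0 := by
      have := hright _ hd
      rw [HosoHolomorph.rotation_zpow, map_mul, map_zpow, SemidirectProduct.rightHom_inl,
        one_zpow, one_mul, SemidirectProduct.rightHom_inr] at this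
      exact ofAdd_eq_one.1 this
    subst hc
    rw [zpow_zero, mul_one, ← map_zpow] at hd
    obtain ⟨n, hn⟩ := HosoHolomorph.exists_isConj_rotation j₀ hd
    rw [map_zpow, hosoRotation_zpow_hosoDelta] at hn
    exact Or.inl ⟨a, hn⟩
  · rw [hlift, HosoAmalgam.lift_vertex] at hd
    have ha : a = -(m j * c) := by
      have := hright _ hd
      rw [← zpow_natCast, ← zpow_mul, HosoHolomorph.rotation_zpow, map_mul,
        map_zpow, map_mul, SemidirectProduct.rightHom_inl, one_mul, HosoHolomorph.rotation,
        SemidirectProduct.rightHom_inr, SemidirectProduct.rightHom_inr, ← ofAdd_zsmul,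
        ← ofAdd_add, ofAdd_eq_one, smul_eq_mul, mul_one] at this
      exact eq_neg_of_add_eq_zero_left this
    have hturn : SemidirectProduct.inl (hosoS h m ℓ j 0 (m j) ^ (-c)) =
        (SemidirectProduct.inl (hosoGen h m ℓ j 0) * HosoHolomorph.rotation m ℓ j₀) ^ a *
          (HosoHolomorph.rotation m ℓ j₀ ^ m j) ^ c := by
      rw [map_zpow, ← HosoHolomorph.isHosoSystem_hom, IsHosoSystem.hom_hosoS, zpow_neg _ (m j : ℤ),
        zpow_natCast, ((hs.commute_pow j).symm.pow_left _).inv_right.mul_zpow, inv_zpow', neg_neg,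
        ha, ← mul_neg, zpow_mul, zpow_natCast]
    rw [← hturn] at hd
    obtain ⟨n, hn⟩ := HosoHolomorph.exists_isConj_rotation j₀ hd
    rw [map_zpow, hosoRotation_zpow_hosoS] at hn
    obtain ⟨u, hu⟩ := isConj_iff.1 (isConj_hosoS_period (ℓ := ℓ) j (0 + (n : ZMod (m j))) 0)
    exact Or.inr ⟨j, -c, hn.trans (isConj_iff.2 ⟨u, by rw [← conj_zpow, hu]⟩)⟩

/-- A power of a full turn and a power of the Garside element of the same length agree. -/
theorem hosoS_period_zpow_eq (j j₀ : Fin h) {k k' : ℤ} (hk : m j * k = ℓ j * k') :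
    hosoS h m ℓ j 0 (m j) ^ k = hosoDelta h m ℓ j₀ ^ k' := by
  have hs := HosoHolomorph.isHosoSystem (m := m) (ℓ := ℓ) j₀
  apply SemidirectProduct.inl_injective
    (φ := zpowersHom (MulAut (HosoGroup h m ℓ)) (hosoRotation m ℓ j₀))
  have hcomm : Commute (HosoHolomorph.rotation m ℓ j₀ ^ ℓ j)
      ((SemidirectProduct.inl (hosoGen h m ℓ j 0) * HosoHolomorph.rotation m ℓ j₀) ^ ℓ j) := by
    rw [hs.pow_eq]
    exact (hs.commute_delta.symm.pow_left _).mul_right (Commute.refl _)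
  have hturn := HosoHolomorph.isHosoSystem_hom j₀ (hosoS h m ℓ j 0 (m j))
  have hdelta := HosoHolomorph.isHosoSystem_hom j₀ (hosoS h m ℓ j 0 (ℓ j))
  rw [IsHosoSystem.hom_hosoS] at hturn hdelta
  rw [hosoS_eq_hosoDelta j j₀ 0] at hdelta
  rw [map_zpow, map_zpow, ← hturn, ← hdelta, zpow_neg, zpow_neg, zpow_natCast, zpow_natCast,
    ((hs.commute_pow j).symm.pow_left _).inv_right.mul_zpow, hcomm.symm.inv_right.mul_zpow,
    inv_zpow, inv_zpow]
  simp only [← zpow_natCast, ← zpow_mul, hk]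

/-- The length homomorphism, normalized so that the Garside element has length one. -/
def hosoLength (m ℓ : Fin h → ℕ) (hℓ : ∀ j, 0 < ℓ j) : HosoGroup h m ℓ →* Multiplicative ℚ :=
  hosoLift (fun j _ => ofAdd (ℓ j : ℚ)⁻¹) (ofAdd 1) fun j i => by
    have : (ℓ j : ℚ) ≠ 0 := by exact_mod_cast (hℓ j).ne'
    simp [← ofAdd_nsmul, this]

theorem toAdd_hosoLength_hosoS (hℓ : ∀ j, 0 < ℓ j) (j : Fin h) (i : ZMod (m j)) (n : ℕ) :
    (hosoLength m ℓ hℓ (hosoS h m ℓ j i n)).toAdd = n / ℓ j := by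
  simp [map_hosoS, hosoLength, hosoLift_hosoGen, div_eq_mul_inv]

/-- The homomorphism counting the letters of the `i`-th factor modulo `ℓ_i`. -/
def hosoCount (m ℓ : Fin h → ℕ) (i : Fin h) : HosoGroup h m ℓ →* Multiplicative (ZMod (ℓ i)) :=
  hosoLift (fun j _ => ofAdd (if j = i then 1 else 0)) 1 fun j _ => by
    by_cases hj : j = i
    · subst hj
      simp [← ofAdd_nsmul]
    · simp [hj]

theorem hosoCount_eq_one_of_mem_hosoFactor {i j : Fin h} (hij : j ≠ i) {x : HosoGroup h m ℓ}
    (hx : x ∈ hosoFactor h m ℓ j) : hosoCount m ℓ i x = 1 := by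
  suffices hosoFactor h m ℓ j ≤ (hosoCount m ℓ i).ker from this hx
  rw [hosoFactor, Subgroup.closure_le]
  rintro _ ⟨k, rfl⟩
  simp [hosoCount, hosoLift_hosoGen, hij]

theorem toAdd_hosoCount_hosoS (i : Fin h) (k : ZMod (m i)) (n : ℕ) :
    (hosoCount m ℓ i (hosoS h m ℓ i k n)).toAdd = n := by
  simp [map_hosoS, hosoCount, hosoLift_hosoGen]

/-- A periodic element conjugate into the `j`-th factor is conjugate to a power of the Garside
element or of a full turn in the `j`-th factor. -/
theorem exists_isConj_of_isConj_mem_hosoFactor (j₀ : Fin h) (hm : ∀ j, 0 < m j)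
    (hℓ : ∀ j, 0 < ℓ j) {p q : ℤ} (hp : p ≠ 0) {x x' : HosoGroup h m ℓ}
    (hx : x ^ p = hosoDelta h m ℓ j₀ ^ q) {j : Fin h} (hx' : x' ∈ hosoFactor h m ℓ j)
    (hxx' : IsConj x x') :
    (∃ k : ℤ, IsConj x (hosoDelta h m ℓ j₀ ^ k)) ∨
      ∃ k : ℤ, IsConj x (hosoS h m ℓ j 0 (m j) ^ k) := by
  rcases exists_isConj_of_zpow_eq_hosoDelta j₀ hm hℓ hp hx with hk | ⟨i, k, hk⟩
  · exact Or.inl hk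
  by_cases hij : j = i
  · subst hij
    exact Or.inr ⟨k, hk⟩
  have hcount := (hosoCount m ℓ i).map_isConj (hxx'.symm.trans hk)
  rw [hosoCount_eq_one_of_mem_hosoFactor hij hx', isConj_one_right, map_zpow] at hcount
  replace hcount := congrArg toAdd hcount
  rw [toAdd_zpow, toAdd_hosoCount_hosoS, toAdd_one] at hcount
  obtain ⟨k', hk'⟩ : (ℓ i : ℤ) ∣ m i * k := by
    rw [← ZMod.intCast_zmod_eq_zero_iff_dvd, ← hcount]
    simp [mul_comm]
  exact Or.inl ⟨k', hosoS_period_zpow_eq i j₀ hk' ▸ hk⟩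

theorem hosoLength_eq_of_zpow_eq (hℓ : ∀ j, 0 < ℓ j) {p : ℤ} (hp : p ≠ 0)
    {x y : HosoGroup h m ℓ} (hxy : x ^ p = y ^ p) :
    (hosoLength m ℓ hℓ x).toAdd = (hosoLength m ℓ hℓ y).toAdd := by
  have := congrArg (fun z => (hosoLength m ℓ hℓ z).toAdd) hxy
  simpa [hp] using this

theorem toAdd_hosoLength_eq_of_isConj (hℓ : ∀ j, 0 < ℓ j) {x y : HosoGroup h m ℓ}
    (hxy : IsConj x y) : (hosoLength m ℓ hℓ x).toAdd = (hosoLength m ℓ hℓ y).toAdd :=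
  congrArg toAdd (isConj_iff_eq.1 ((hosoLength m ℓ hℓ).map_isConj hxy))

end Hoso

/-- Two `(p,q)`-periodic elements of a hosohedral-type group are conjugate if and only if
they both admit a conjugate lying in the same factor subgroup. -/
theorem periodic_hoso_conjugacy (h : ℕ) (m ℓ : Fin h → ℕ) (hh : 0 < h)
    (hm : ∀ j, 0 < m j) (hℓ : ∀ j, 0 < ℓ j) (hne : ∀ j, (m j, ℓ j) ≠ (1, 1))
    (p : ℤ) (hp : p ≠ 0) (q : ℤ) (x y : HosoGroup h m ℓ)
    (hx : x ^ p = (hosoDelta h m ℓ ⟨0, hh⟩) ^ q)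
    (hy : y ^ p = (hosoDelta h m ℓ ⟨0, hh⟩) ^ q) :
    IsConj x y ↔ ∃ j : Fin h,
      (∃ x' ∈ hosoFactor h m ℓ j, IsConj x x') ∧
      (∃ y' ∈ hosoFactor h m ℓ j, IsConj y y') := by
  set j₀ : Fin h := ⟨0, hh⟩
  constructor
  · intro hxy
    rcases exists_isConj_of_zpow_eq_hosoDelta j₀ hm hℓ hp hx with ⟨k, hk⟩ | ⟨j, k, hk⟩
    · have hmem := zpow_mem (hosoS_mem_hosoFactor (m := m) (ℓ := ℓ) j₀ 0 (ℓ j₀)) k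
      exact ⟨j₀, ⟨_, hmem, hk⟩, ⟨_, hmem, hxy.symm.trans hk⟩⟩
    · have hmem := zpow_mem (hosoS_mem_hosoFactor (m := m) (ℓ := ℓ) j 0 (m j)) k
      exact ⟨j, ⟨_, hmem, hk⟩, ⟨_, hmem, hxy.symm.trans hk⟩⟩
  · rintro ⟨j, ⟨x', hx', hxx'⟩, ⟨y', hy', hyy'⟩⟩
    have hlen := hosoLength_eq_of_zpow_eq hℓ hp (hx.trans hy.symm)
    have hm₀ : (m j : ℚ) ≠ 0 := by exact_mod_cast (hm j).ne'
    have hℓ₀ : (ℓ j : ℚ) ≠ 0 := by exact_mod_cast (hℓ j).ne'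
    have hdelta : ∀ {z : HosoGroup h m ℓ} {k : ℤ}, IsConj z (hosoDelta h m ℓ j₀ ^ k) →
        (hosoLength m ℓ hℓ z).toAdd * ℓ j = k * ℓ j := by
      intro z k hz
      rw [toAdd_hosoLength_eq_of_isConj hℓ hz, map_zpow, toAdd_zpow,
        ← hosoS_eq_hosoDelta j j₀ 0, toAdd_hosoLength_hosoS, div_self hℓ₀]
      simp
    have hturn : ∀ {z : HosoGroup h m ℓ} {k : ℤ}, IsConj z (hosoS h m ℓ j 0 (m j) ^ k) →
        (hosoLength m ℓ hℓ z).toAdd * ℓ j = k * m j := by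
      intro z k hz
      rw [toAdd_hosoLength_eq_of_isConj hℓ hz, map_zpow, toAdd_zpow, toAdd_hosoLength_hosoS,
        zsmul_eq_mul, mul_assoc, div_mul_cancel₀ _ hℓ₀]
    rcases exists_isConj_of_isConj_mem_hosoFactor j₀ hm hℓ hp hx hx' hxx' with
        ⟨k, hk⟩ | ⟨k, hk⟩ <;>
      rcases exists_isConj_of_isConj_mem_hosoFactor j₀ hm hℓ hp hy hy' hyy' with
        ⟨k', hk'⟩ | ⟨k', hk'⟩
    · have := (hdelta hk).symm.trans (hlen ▸ hdelta hk')
      obtain rfl : k = k' := by exact_mod_cast mul_right_cancel₀ hℓ₀ this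
      exact hk.trans hk'.symm
    · have := (hdelta hk).symm.trans (hlen ▸ hturn hk')
      have hkk' : m j * k' = ℓ j * k := by
        rw [mul_comm, mul_comm (ℓ j : ℤ)]
        exact_mod_cast this.symm
      exact hk.trans (hosoS_period_zpow_eq j j₀ hkk' ▸ hk'.symm)
    · have := (hturn hk).symm.trans (hlen ▸ hdelta hk')
      have hkk' : m j * k = ℓ j * k' := by
        rw [mul_comm, mul_comm (ℓ j : ℤ)]
        exact_mod_cast this
      exact (hosoS_period_zpow_eq j j₀ hkk' ▸ hk).trans hk'.symm
    · have := (hturn hk).symm.trans (hlen ▸ hturn hk')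
      obtain rfl : k = k' := by exact_mod_cast mul_right_cancel₀ hm₀ this
      exact hk.trans hk'.symm
end
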